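/- Let n ≥ 2 and 1 < p < n, and set p* = np/(n−p), p' = p/(p−1), n' = n/(n−1). There is a constant c depending only on n and p such that for every weight w with [w]_{A_{p,p*}} < ∞ and every measurable function f on ℝⁿ, ‖w · I₁f‖_{L^{p*}(ℝⁿ)} ≤ c · [w]_{A_{p,p*}}^{(1/n')·max{1, p'/p*}} · ‖w f‖_{L^{p}(ℝⁿ)}. -/

import Mathlib

/-!
Write `q = p*`, `a = 1 / q`, `b = 1 / p'`, so that `a + b = 1 / n'`, and put `u = w ^ q`,
`σ = w ^ (-p')`. The `A_{p,q}` condition with constant `A` becomes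
`u(Q) ^ a * σ(Q) ^ b ≤ K * |Q| ^ (a + b)` with `K = A ^ a`, while Hölder's inequality gives
`|E| ^ (a + b) ≤ u(E) ^ a * σ(E) ^ b` for every measurable `E` (`APair`, `APair.of_weight`).
By duality (`lintegral_rpow_le_of_dual`) the theorem amounts to a bound for the bilinear form of the
Riesz kernel in `L ^ p (σ)` and `L ^ (q') (u)`, where `p = 1 / (1 - b)` and `q' = 1 / (1 - a)`.

The one-third trick (`exists_shift`) dominates a truncation of that form by `2 ^ n` dyadic forms
`∑ |Q| ^ (-(a + b)) * ∫_Q f dσ * ∫_Q g du` on shifted grids (`kerT_form_le`). On each grid the cells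
are split according to which of the quantities `⟨f⟩ ^ p * σ(Q)` and `⟨g⟩ ^ q' * u(Q)` is the larger.
On the first family a stopping-time argument for the averages of `f`, together with the Carleson
embedding theorem, reduces the estimate to a testing condition for `σ` (`Grid.half`); the second
family is symmetric. Since `p < q`, only one testing condition is needed for each family.

For the testing condition (`Grid.exists_testing`), the interaction of two generations of cells
decays geometrically, and the sum over the generations converges because the mass of a child
is at most `1 - r` times that of its parent. The two inequalities of `APair` give `r` comparable to
`K ^ (-1 / b)` for `σ` and to `K ^ (-1 / a)` for `u` (`APair.mass`). The testing constants are then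
`K * r ^ (-a)` and `K * r ^ (-b)` respectively, and the total is
`K * (K ^ (a / b) + K ^ (b / a)) = A ^ ((a + b) * a / b) + A ^ (a + b)`. As `A ≥ 1` and
`a / b = p' / p*`, this is at most `2 * A ^ ((1 / n') * max 1 (p' / p*))`.

A weight that vanishes on a set of positive measure and has finite constant vanishes almost
everywhere (`ae_zero_or_ae_pos`); for it there is nothing to prove.
-/

open MeasureTheory ENNReal Filter Set

noncomputable section

/-- `ℝⁿ` with the Euclidean structure. -/
abbrev En (n : ℕ) := EuclideanSpace ℝ (Fin n)

/-- Axis-parallel closed cube with corner `a` and side length `h`. -/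
def cube {n : ℕ} (a : En n) (h : ℝ) : Set (En n) := {y | ∀ i, a i ≤ y i ∧ y i ≤ a i + h}

/-- Riesz potential of order `1` of a (nonnegative) function:
`I₁ g (x) = ∫ g(y) |x-y|^{-(n-1)} dy`. -/
def riesz (n : ℕ) (g : En n → ℝ) (x : En n) : ℝ≥0∞ :=
  ∫⁻ y, ENNReal.ofReal (g y) * ENNReal.ofReal (‖x - y‖ ^ (-((n : ℝ) - 1)))

/-- The quantity `(∫ g^p dμ)^{1/p}` for an `ℝ≥0∞`-valued function `g`. -/
def lpNorm {α : Type*} [MeasurableSpace α] (p : ℝ) (g : α → ℝ≥0∞) (μ : Measure α) : ℝ≥0∞ :=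
  (∫⁻ x, g x ^ p ∂μ) ^ (1 / p)

/-- Average `⨍_Q g` of an `ℝ≥0∞`-valued function over a set `Q`. -/
def avgE {n : ℕ} (g : En n → ℝ≥0∞) (Q : Set (En n)) : ℝ≥0∞ :=
  (volume Q)⁻¹ * ∫⁻ x in Q, g x

/-- The `A_{p,p*}` constant of a weight `w`; here `ps` plays the role of `p*` and
`pp` that of `p' = p/(p-1)`:
`[w]_{A_{p,p*}} = sup_Q (⨍_Q w^{p*}) (⨍_Q w^{-p'})^{p*/p'}`. -/
def Apq (n : ℕ) (ps pp : ℝ) (w : En n → ℝ) : ℝ≥0∞ :=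
  ⨆ (a : En n) (h : ℝ) (_ : 0 < h),
    avgE (fun x => ENNReal.ofReal (w x) ^ ps) (cube a h) *
      avgE (fun x => ENNReal.ofReal (w x) ^ (-pp)) (cube a h) ^ (ps / pp)

/-- The `A_{1,s}` constant of a weight `w`: the least `c` such that
`⨍_Q w^s ≤ c · essinf_Q w^s` for every cube `Q`. -/
def A1C (n : ℕ) (s : ℝ) (w : En n → ℝ) : ℝ≥0∞ :=
  sInf {c : ℝ≥0∞ | ∀ (a : En n) (h : ℝ), 0 < h →
    avgE (fun x => ENNReal.ofReal (w x) ^ s) (cube a h) ≤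
      c * essInf (fun x => ENNReal.ofReal (w x) ^ s) (volume.restrict (cube a h))}

/-- Hardy–Littlewood maximal operator over axis-parallel cubes containing `x`. -/
def maximal (n : ℕ) (g : En n → ℝ≥0∞) (x : En n) : ℝ≥0∞ :=
  ⨆ (a : En n) (h : ℝ) (_ : 0 < h) (_ : x ∈ cube a h), avgE g (cube a h)

/-- Weak `L^s` quasinorm `sup_{t>0} t · μ{|g|>t}^{1/s}` of a real function. -/
def wnormR {α : Type*} [MeasurableSpace α] (s : ℝ) (g : α → ℝ) (μ : Measure α) : ℝ≥0∞ :=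
  ⨆ (t : ℝ) (_ : 0 < t), ENNReal.ofReal t * μ {x | t < |g x|} ^ (1 / s)

/-- The (real-valued) Riesz potential of order `1` of a signed function,
defined by the Bochner integral `I₁ f (x) = ∫ f(y) |x-y|^{-(n-1)} dy`. -/
def rieszR (n : ℕ) (f : En n → ℝ) (x : En n) : ℝ :=
  ∫ y, f y * ‖x - y‖ ^ (-((n : ℝ) - 1))

set_option linter.unusedSectionVars false

/-! ### Nested partitions -/

/-- A sequence of countable measurable partitions of `X`, each refining the previous one. The
cells of generation `j` are the fibres of `κ j`; they play the role of the dyadic cubes. -/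
structure Grid (X ι : Type*) [MeasurableSpace X] where
  κ : ℕ → X → ι
  meas : ∀ j m, MeasurableSet (κ j ⁻¹' {m})
  refine : ∀ j x y, κ (j + 1) x = κ (j + 1) y → κ j x = κ j y

namespace Grid

variable {X ι : Type*} [MeasurableSpace X] [Countable ι] (G : Grid X ι)

/-- The cell of generation `j` containing `x`. -/
def Q (j : ℕ) (x : X) : Set X := {y | G.κ j y = G.κ j x}

/-- The function `ψ` is constant on the cells of generation `j`. -/
def Lev {β : Type*} (j : ℕ) (ψ : X → β) : Prop := ∀ x y, G.κ j x = G.κ j y → ψ x = ψ y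

/-- The `μ`-mass of the cell of generation `j` containing `x`. -/
def ms (μ : Measure X) (j : ℕ) (x : X) : ℝ≥0∞ := μ (G.Q j x)

/-- The `μ`-average of `f` over the cell of generation `j` containing `x`. -/
def av (μ : Measure X) (f : X → ℝ≥0∞) (j : ℕ) (x : X) : ℝ≥0∞ :=
  (∫⁻ y in G.Q j x, f y ∂μ) / μ (G.Q j x)

lemma measQ (j : ℕ) (x : X) : MeasurableSet (G.Q j x) := G.meas j (G.κ j x)

lemma mem_Q (j : ℕ) (x : X) : x ∈ G.Q j x := rfl

lemma Q_congr {j : ℕ} {x y : X} (h : G.κ j x = G.κ j y) : G.Q j x = G.Q j y := by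
  simp [Q, h]

lemma refine_le {i j : ℕ} (hij : i ≤ j) {x y : X} (h : G.κ j x = G.κ j y) :
    G.κ i x = G.κ i y := by
  induction hij with
  | refl => exact h
  | step _ ih => exact ih (G.refine _ _ _ h)

lemma Q_anti {i j : ℕ} (hij : i ≤ j) (x : X) : G.Q j x ⊆ G.Q i x :=
  fun _ hy => G.refine_le hij hy

lemma Lev.mono {G : Grid X ι} {β : Type*} {ψ : X → β} {i j : ℕ} (h : G.Lev i ψ) (hij : i ≤ j) : G.Lev j ψ :=
  fun x y hxy => h x y (G.refine_le hij hxy)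

lemma lev_ms (μ : Measure X) (j : ℕ) : G.Lev j (G.ms μ j) := fun x y h => by
  simp [ms, G.Q_congr h]

lemma lev_av (μ : Measure X) (f : X → ℝ≥0∞) (j : ℕ) : G.Lev j (G.av μ f j) := fun x y h => by
  simp [av, G.Q_congr h]

lemma Lev.measurable {G : Grid X ι} {j : ℕ} {ψ : X → ℝ≥0∞} (h : G.Lev j ψ) : Measurable ψ := by
  intro s _
  have : ψ ⁻¹' s = ⋃ m ∈ {m | ∃ x, G.κ j x = m ∧ ψ x ∈ s}, G.κ j ⁻¹' {m} := by
    ext x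
    simp only [mem_preimage, mem_ofPred_eq, mem_iUnion, mem_singleton_iff, exists_prop]
    constructor
    · intro hx; exact ⟨_, ⟨x, rfl, hx⟩, rfl⟩
    · rintro ⟨m, ⟨y, hy, hs⟩, hx⟩
      rwa [h x y (hx.trans hy.symm)]
  rw [this]
  exact MeasurableSet.biUnion (to_countable _) fun m _ => G.meas j m

lemma Lev.measurableSet {G : Grid X ι} {j : ℕ} {P : X → Prop} (h : G.Lev j P) : MeasurableSet {x | P x} := by
  have : {x | P x} = ⋃ m ∈ {m | ∃ x, G.κ j x = m ∧ P x}, G.κ j ⁻¹' {m} := by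
    ext x
    simp only [mem_preimage, mem_ofPred_eq, mem_iUnion, mem_singleton_iff, exists_prop]
    constructor
    · intro hx; exact ⟨_, ⟨x, rfl, hx⟩, rfl⟩
    · rintro ⟨m, ⟨y, hy, hs⟩, hx⟩
      rwa [h x y (hx.trans hy.symm)]
  rw [this]
  exact MeasurableSet.biUnion (to_countable _) fun m _ => G.meas j m

lemma measurable_ms (μ : Measure X) (j : ℕ) : Measurable (G.ms μ j) := (G.lev_ms μ j).measurable

lemma measurable_av (μ : Measure X) (f : X → ℝ≥0∞) (j : ℕ) : Measurable (G.av μ f j) :=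
  (G.lev_av μ f j).measurable

lemma lintegral_fibers (μ : Measure X) (j : ℕ) (H : X → ℝ≥0∞) :
    ∫⁻ x, H x ∂μ = ∑' m, ∫⁻ x in G.κ j ⁻¹' {m}, H x ∂μ := by
  rw [← lintegral_iUnion (G.meas j)]
  · have : (⋃ m, G.κ j ⁻¹' {m}) = univ := by ext x; simp
    rw [this, Measure.restrict_univ]
  · intro m m' h
    exact Disjoint.preimage _ (by simpa using h)

/-- An inequality between integrals over all cells of generation `j` may be integrated against
any weight that is constant on these cells. -/
lemma comp {μ ν : Measure X} {j : ℕ} {H K ψ : X → ℝ≥0∞} (hψ : G.Lev j ψ)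
    (hH : Measurable H) (hK : Measurable K)
    (h : ∀ x, ψ x ≠ 0 → ∫⁻ y in G.Q j x, H y ∂μ ≤ ∫⁻ y in G.Q j x, K y ∂ν) :
    ∫⁻ x, ψ x * H x ∂μ ≤ ∫⁻ x, ψ x * K x ∂ν := by
  rw [G.lintegral_fibers μ j, G.lintegral_fibers ν j]
  refine ENNReal.tsum_le_tsum fun m => ?_
  rcases (G.κ j ⁻¹' {m}).eq_empty_or_nonempty with he | ⟨x, hx⟩
  · simp [he]
  · have hx' : G.κ j x = m := hx
    have hQ : G.κ j ⁻¹' {m} = G.Q j x := by ext y; simp [Q, hx']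
    have e : ∀ (ρ : Measure X) (L : X → ℝ≥0∞), Measurable L →
        ∫⁻ y in G.Q j x, ψ y * L y ∂ρ = ψ x * ∫⁻ y in G.Q j x, L y ∂ρ := by
      intro ρ L hL
      rw [← lintegral_const_mul _ hL]
      refine setLIntegral_congr_fun (G.measQ j x) fun y hy => ?_
      simp only [hψ y x hy]
    rw [hQ, e _ _ hH, e _ _ hK]
    by_cases h0 : ψ x = 0
    · simp [h0]
    · exact mul_le_mul_right (h x h0) _

/-- Localised form of `Grid.comp`, over a cell `Q i z` of an earlier generation. -/
lemma comp_on {μ ν : Measure X} {i j : ℕ} (hij : i ≤ j) (z : X) {H K ψ : X → ℝ≥0∞}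
    (hψ : G.Lev j ψ) (hH : Measurable H) (hK : Measurable K)
    (h : ∀ x, ∫⁻ y in G.Q j x, H y ∂μ ≤ ∫⁻ y in G.Q j x, K y ∂ν) :
    ∫⁻ x in G.Q i z, ψ x * H x ∂μ ≤ ∫⁻ x in G.Q i z, ψ x * K x ∂ν := by
  rw [← lintegral_indicator (G.measQ i z), ← lintegral_indicator (G.measQ i z)]
  have hi : ∀ L : X → ℝ≥0∞, (G.Q i z).indicator (fun x => ψ x * L x) =
      fun x => (G.Q i z).indicator ψ x * L x := by
    intro L; ext x; by_cases hx : x ∈ G.Q i z <;> simp [hx]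
  rw [hi, hi]
  refine G.comp (j := j) ?_ hH hK (fun x _ => h x)
  intro x y hxy
  have : x ∈ G.Q i z ↔ y ∈ G.Q i z := by
    simp only [Q, mem_ofPred_eq, G.refine_le hij hxy]
  by_cases hx : x ∈ G.Q i z
  · rw [indicator_of_mem hx, indicator_of_mem (this.1 hx), hψ x y hxy]
  · rw [indicator_of_notMem hx, indicator_of_notMem (fun h => hx (this.2 h))]

lemma setLIntegral_lev (μ : Measure X) {j : ℕ} {ψ : X → ℝ≥0∞} (hψ : G.Lev j ψ) (x : X) :
    ∫⁻ y in G.Q j x, ψ y ∂μ = ψ x * μ (G.Q j x) := by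
  rw [← setLIntegral_const]
  exact setLIntegral_congr_fun (G.measQ j x) fun y hy => hψ y x hy

lemma setLIntegral_av {μ : Measure X} {f : X → ℝ≥0∞} {j : ℕ} {x : X}
    (h0 : G.ms μ j x ≠ 0) (ht : G.ms μ j x ≠ ∞) :
    ∫⁻ y in G.Q j x, G.av μ f j y ∂μ = ∫⁻ y in G.Q j x, f y ∂μ := by
  rw [G.setLIntegral_lev μ (G.lev_av μ f j)]
  exact ENNReal.div_mul_cancel h0 ht

/-- Averaging over the cells of generation `j` does not change the integral against a weight
constant on these cells. -/
lemma lintegral_mul_av {μ : Measure X} {f : X → ℝ≥0∞} {j : ℕ} {ψ : X → ℝ≥0∞}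
    (hψ : G.Lev j ψ) (hf : Measurable f)
    (h0 : ∀ x, G.ms μ j x ≠ 0) (ht : ∀ x, G.ms μ j x ≠ ∞) :
    ∫⁻ x, ψ x * G.av μ f j x ∂μ = ∫⁻ x, ψ x * f x ∂μ := by
  apply le_antisymm
  · exact G.comp hψ (G.measurable_av _ _ _) hf fun x _ => (G.setLIntegral_av (h0 x) (ht x)).le
  · exact G.comp hψ hf (G.measurable_av _ _ _) fun x _ => (G.setLIntegral_av (h0 x) (ht x)).ge

/-- Jensen's inequality on a cell. -/
lemma av_rpow_mul_le {μ : Measure X} {f : X → ℝ≥0∞} (hf : Measurable f) {p : ℝ} (hp : 1 < p)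
    {j : ℕ} {x : X} (h0 : G.ms μ j x ≠ 0) (ht : G.ms μ j x ≠ ∞) :
    G.av μ f j x ^ p * G.ms μ j x ≤ ∫⁻ y in G.Q j x, f y ^ p ∂μ := by
  have hp0 : 0 < p := by linarith
  have key := ENNReal.lintegral_mul_norm_pow_le (μ := μ.restrict (G.Q j x))
    (f := fun y => f y ^ p) (g := fun _ => 1) (hf.pow_const p).aemeasurable aemeasurable_const
    (p := 1 / p) (q := 1 - 1 / p) (by positivity)
    (by rw [sub_nonneg, div_le_one hp0]; exact hp.le) (by ring)
  simp only [ENNReal.one_rpow, mul_one, lintegral_const, Measure.restrict_apply_univ, one_mul,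
    ← ENNReal.rpow_mul, mul_one_div_cancel hp0.ne', ENNReal.rpow_one] at key
  set m := G.ms μ j x with hm
  have hm' : μ (G.Q j x) = m := rfl
  rw [hm'] at key
  set I := ∫⁻ y in G.Q j x, f y ^ p ∂μ
  have h1 : G.av μ f j x ≤ I ^ (1 / p) * m ^ (-(1 / p)) := by
    rw [av, hm', ENNReal.div_le_iff h0 ht, mul_assoc]
    refine key.trans_eq ?_
    congr 1
    conv_rhs => enter [2]; rw [← ENNReal.rpow_one m]
    rw [← ENNReal.rpow_add _ _ h0 ht]
    congr 1; ring
  calc G.av μ f j x ^ p * m ≤ (I ^ (1 / p) * m ^ (-(1 / p))) ^ p * m := by gcongr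
    _ = I := by
      rw [ENNReal.mul_rpow_of_nonneg _ _ hp0.le, ← ENNReal.rpow_mul, ← ENNReal.rpow_mul,
        one_div_mul_cancel hp0.ne', ENNReal.rpow_one, neg_mul, one_div_mul_cancel hp0.ne',
        ENNReal.rpow_neg_one, mul_assoc, ENNReal.inv_mul_cancel h0 ht, mul_one]

end Grid

/-! ### Stopping sequences along a chain of cells -/

section Seq

open Classical in
/-- Current stopping value along a chain. For averages `A` and a selection `𝒜`, generation `j` is a
stopping generation if it is selected and `A j` exceeds twice the current value, which is then
updated to `A j`; `stp A 𝒜 j` is the value before generation `j` is examined. -/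
def stp (A : ℕ → ℝ≥0∞) (𝒜 : ℕ → Prop) : ℕ → ℝ≥0∞
  | 0 => 0
  | j + 1 => if 𝒜 j ∧ 2 * stp A 𝒜 j < A j then A j else stp A 𝒜 j

/-- Generation `j` is a stopping generation, see `stp`. -/
def Pr (A : ℕ → ℝ≥0∞) (𝒜 : ℕ → Prop) (j : ℕ) : Prop := 𝒜 j ∧ 2 * stp A 𝒜 j < A j

open Classical in
/-- Indicator of `Pr`. -/
def chi (A : ℕ → ℝ≥0∞) (𝒜 : ℕ → Prop) (j : ℕ) : ℝ≥0∞ := if Pr A 𝒜 j then 1 else 0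

open Classical in
/-- The value `B l` at the first generation `l` with `j ≤ l < j + k` and `P l`, and `g` if there is
no such generation. -/
def gam (P : ℕ → Prop) (B : ℕ → ℝ≥0∞) (g : ℝ≥0∞) : ℕ → ℕ → ℝ≥0∞
  | 0, _ => g
  | k + 1, j => if P j then B j else gam P B g k (j + 1)

variable {A : ℕ → ℝ≥0∞} {𝒜 : ℕ → Prop}

lemma stp_succ_of_pr {j : ℕ} (h : Pr A 𝒜 j) : stp A 𝒜 (j + 1) = A j := by
  rw [stp]; exact if_pos h

lemma stp_succ_of_not_pr {j : ℕ} (h : ¬ Pr A 𝒜 j) : stp A 𝒜 (j + 1) = stp A 𝒜 j := by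
  rw [stp]; exact if_neg h

lemma stp_congr {A' : ℕ → ℝ≥0∞} {𝒜' : ℕ → Prop} {j : ℕ}
    (h : ∀ i < j, A i = A' i ∧ 𝒜 i = 𝒜' i) : stp A 𝒜 j = stp A' 𝒜' j := by
  induction j with
  | zero => rfl
  | succ j ih =>
    have ih := ih fun i hi => h i (by omega)
    obtain ⟨h1, h2⟩ := h j (by omega)
    have hP : Pr A 𝒜 j ↔ Pr A' 𝒜' j := by rw [Pr, Pr, ih, h1, h2]
    by_cases hp : Pr A 𝒜 j
    · rw [stp_succ_of_pr hp, stp_succ_of_pr (hP.1 hp), h1]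
    · rw [stp_succ_of_not_pr hp, stp_succ_of_not_pr (fun h => hp (hP.2 h)), ih]

lemma le_two_mul_stp {j : ℕ} (h : 𝒜 j) : A j ≤ 2 * stp A 𝒜 (j + 1) := by
  by_cases hp : Pr A 𝒜 j
  · rw [stp_succ_of_pr hp, two_mul]; exact le_self_add
  · rw [stp_succ_of_not_pr hp]
    by_contra hc
    exact hp ⟨h, not_le.1 hc⟩

/-- The constant `1 / (1 - 2 ^ (-e))` of a geometric sum. -/
def geoC (e : ℝ) : ℝ≥0∞ := ENNReal.ofReal (1 / (1 - 2 ^ (-e)))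

lemma geoC_spec {e : ℝ} (he : 0 < e) : geoC e * ENNReal.ofReal (2 ^ (-e)) + 1 ≤ geoC e := by
  have h1 : (2 : ℝ) ^ (-e) < 1 := Real.rpow_lt_one_of_one_lt_of_neg (by norm_num) (by linarith)
  have h0 : (0 : ℝ) < 2 ^ (-e) := by positivity
  have h2 : 0 < 1 - (2 : ℝ) ^ (-e) := by linarith
  rw [geoC, ← ENNReal.ofReal_mul (by positivity), ← ENNReal.ofReal_one,
    ← ENNReal.ofReal_add (by positivity) (by norm_num)]
  apply ENNReal.ofReal_le_ofReal
  apply le_of_eq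
  field_simp
  ring

/-- Stopping values at least double, so their powers are dominated by the last one. -/
lemma sum_chi_le {e : ℝ} (he : 0 < e) (j : ℕ) :
    ∑ i ∈ Finset.range j, chi A 𝒜 i * A i ^ e ≤ geoC e * stp A 𝒜 j ^ e := by
  induction j with
  | zero => simp
  | succ j ih =>
    rw [Finset.sum_range_succ]
    by_cases hp : Pr A 𝒜 j
    · rw [stp_succ_of_pr hp, chi, if_pos hp, one_mul]
      have h1 : stp A 𝒜 j ^ e ≤ ENNReal.ofReal (2 ^ (-e)) * A j ^ e := by
        have h2 : stp A 𝒜 j ≤ 2⁻¹ * A j := by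
          have := hp.2.le
          rw [mul_comm, ← ENNReal.le_div_iff_mul_le (by simp) (by simp)] at this
          rwa [ENNReal.div_eq_inv_mul] at this
        calc stp A 𝒜 j ^ e ≤ (2⁻¹ * A j) ^ e := by gcongr
          _ = _ := by
            rw [ENNReal.mul_rpow_of_nonneg _ _ he.le, ← ENNReal.ofReal_rpow_of_pos (by norm_num),
              ENNReal.rpow_neg, ENNReal.inv_rpow]
            simp
      calc _ ≤ geoC e * stp A 𝒜 j ^ e + A j ^ e := by gcongr
        _ ≤ geoC e * (ENNReal.ofReal (2 ^ (-e)) * A j ^ e) + A j ^ e := by gcongr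
        _ = (geoC e * ENNReal.ofReal (2 ^ (-e)) + 1) * A j ^ e := by ring
        _ ≤ _ := by gcongr; exact geoC_spec he
    · rw [stp_succ_of_not_pr hp, chi, if_neg hp]
      simpa using ih

lemma stp_rpow_le {e : ℝ} (he : 0 < e) (j : ℕ) :
    stp A 𝒜 j ^ e ≤ ∑ i ∈ Finset.range j, chi A 𝒜 i * A i ^ e := by
  induction j with
  | zero => simp [stp, he]
  | succ j ih =>
    rw [Finset.sum_range_succ]
    by_cases hp : Pr A 𝒜 j
    · rw [stp_succ_of_pr hp, chi, if_pos hp, one_mul]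
      exact le_add_self
    · rw [stp_succ_of_not_pr hp]
      exact ih.trans le_self_add

lemma gam_step {P : ℕ → Prop} {B : ℕ → ℝ≥0∞} {g : ℝ≥0∞} {J j : ℕ} (hj : j < J) :
    gam P B g (J - j) j = gam P B g ((J - (j + 1)) + 1) j := by
  congr 1; omega

lemma stp_mul_gam_le {B : ℕ → ℝ≥0∞} {g : ℝ≥0∞} {J : ℕ} (j : ℕ) (hj : j ≤ J) :
    stp A 𝒜 j * gam (Pr A 𝒜) B g (J - j) j ≤
      ∑ i ∈ Finset.range j, chi A 𝒜 i * A i * gam (Pr A 𝒜) B g (J - (i + 1)) (i + 1) := by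
  induction j with
  | zero => simp [stp]
  | succ j ih =>
    rw [Finset.sum_range_succ]
    by_cases hp : Pr A 𝒜 j
    · rw [stp_succ_of_pr hp, chi, if_pos hp, one_mul]
      exact le_add_self
    · rw [stp_succ_of_not_pr hp]
      refine le_trans ?_ (le_trans (ih (by omega)) le_self_add)
      rw [gam_step (j := j) (by omega)]
      conv_rhs => rw [gam, if_neg hp]

lemma sum_chi_gam {B : ℕ → ℝ≥0∞} {g : ℝ≥0∞} {e : ℝ} {J : ℕ} (k : ℕ) (hk : k ≤ J) :
    ∑ i ∈ Finset.Ico (J - k) J, chi A 𝒜 i * gam (Pr A 𝒜) B g (J - (i + 1)) (i + 1) ^ e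
        + gam (Pr A 𝒜) B g k (J - k) ^ e
      = ∑ i ∈ Finset.Ico (J - k) J, chi A 𝒜 i * B i ^ e + g ^ e := by
  induction k with
  | zero => simp [gam]
  | succ k ih =>
    have ih := ih (by omega)
    obtain ⟨j, hj⟩ : ∃ j, j = J - (k + 1) := ⟨_, rfl⟩
    have h1 : J - k = j + 1 := by omega
    have h2 : J - (j + 1) = k := by omega
    have key : ∀ F : ℕ → ℝ≥0∞, ∑ i ∈ Finset.Ico j J, F i = F j + ∑ i ∈ Finset.Ico (j + 1) J, F i :=
      fun F => Finset.sum_eq_sum_Ico_succ_bot (by omega) F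
    rw [← hj, key (fun i => chi A 𝒜 i * B i ^ e),
      key (fun i => chi A 𝒜 i * gam (Pr A 𝒜) B g (J - (i + 1)) (i + 1) ^ e)]
    rw [h1] at ih
    rw [h2, gam]
    by_cases hp : Pr A 𝒜 j
    · rw [if_pos hp, chi, if_pos hp, one_mul, one_mul]
      rw [add_assoc (B j ^ e), ← ih]
      ring
    · rw [if_neg hp, chi, if_neg hp]
      simpa using ih

end Seq

namespace Grid

variable {X ι : Type*} [MeasurableSpace X] [Countable ι] (G : Grid X ι)

section Adapted

variable {A : ℕ → X → ℝ≥0∞} {𝒜 : ℕ → X → Prop}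

lemma lev_stp_succ (hA : ∀ j, G.Lev j (A j)) (h𝒜 : ∀ j, G.Lev j (𝒜 j)) (j : ℕ) :
    G.Lev j (fun x => stp (fun i => A i x) (fun i => 𝒜 i x) (j + 1)) := by
  intro x y h
  refine stp_congr fun i hi => ?_
  have hi' := G.refine_le (Nat.lt_succ_iff.1 hi) h
  exact ⟨hA i x y hi', h𝒜 i x y hi'⟩

lemma lev_stp (hA : ∀ j, G.Lev j (A j)) (h𝒜 : ∀ j, G.Lev j (𝒜 j)) (j : ℕ) :
    G.Lev j (fun x => stp (fun i => A i x) (fun i => 𝒜 i x) j) := by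
  cases j with
  | zero => intro x y _; simp [stp]
  | succ j => exact (G.lev_stp_succ hA h𝒜 j).mono (Nat.le_succ j)

lemma lev_pr (hA : ∀ j, G.Lev j (A j)) (h𝒜 : ∀ j, G.Lev j (𝒜 j)) (j : ℕ) :
    G.Lev j (fun x => Pr (fun i => A i x) (fun i => 𝒜 i x) j) := by
  intro x y h
  have h1 := G.lev_stp hA h𝒜 j x y h
  simp only [Pr] at h1 ⊢
  rw [h1, hA _ x y h, h𝒜 _ x y h]

lemma lev_chi (hA : ∀ j, G.Lev j (A j)) (h𝒜 : ∀ j, G.Lev j (𝒜 j)) (j : ℕ) :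
    G.Lev j (fun x => chi (fun i => A i x) (fun i => 𝒜 i x) j) := by
  intro x y h
  have h1 := G.lev_pr hA h𝒜 j x y h
  simp only [chi] at h1 ⊢
  rw [h1]

lemma measurable_gam {P : ℕ → X → Prop} (hP : ∀ j, G.Lev j (P j)) {B : ℕ → X → ℝ≥0∞}
    (hB : ∀ j, Measurable (B j)) {g : X → ℝ≥0∞} (hg : Measurable g) (k j : ℕ) :
    Measurable (fun x => gam (fun i => P i x) (fun i => B i x) (g x) k j) := by
  induction k generalizing j with
  | zero => simpa [gam] using hg
  | succ k ih =>
    simp only [gam]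
    exact Measurable.ite (hP j).measurableSet (hB j) (ih (j + 1))

/-- The stopped average of `g` has the same integral as `g` against weights constant on cells that
precede the stopping. -/
lemma lintegral_mul_gam {u : Measure X} (h0 : ∀ j x, G.ms u j x ≠ 0) (ht : ∀ j x, G.ms u j x ≠ ∞)
    {P : ℕ → X → Prop} (hP : ∀ j, G.Lev j (P j)) {g : X → ℝ≥0∞} (hg : Measurable g)
    (k j : ℕ) {ψ : X → ℝ≥0∞} (hψ : G.Lev j ψ) :
    ∫⁻ x, ψ x * gam (fun i => P i x) (fun i => G.av u g i x) (g x) k j ∂u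
      = ∫⁻ x, ψ x * g x ∂u := by
  classical
  induction k generalizing j ψ with
  | zero => simp [gam]
  | succ k ih =>
    set ψ1 : X → ℝ≥0∞ := fun x => if P j x then ψ x else 0 with hψ1
    set ψ2 : X → ℝ≥0∞ := fun x => if P j x then 0 else ψ x with hψ2
    have l1 : G.Lev j ψ1 := fun x y h => by simp only [hψ1, hψ x y h, hP j x y h]
    have l2 : G.Lev j ψ2 := fun x y h => by simp only [hψ2, hψ x y h, hP j x y h]
    have e1 : ∀ x, ψ x * gam (fun i => P i x) (fun i => G.av u g i x) (g x) (k + 1) j =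
        ψ1 x * G.av u g j x +
          ψ2 x * gam (fun i => P i x) (fun i => G.av u g i x) (g x) k (j + 1) := by
      intro x
      by_cases h : P j x <;> simp [hψ1, hψ2, gam, h]
    have e2 : ∀ x, ψ x * g x = ψ1 x * g x + ψ2 x * g x := by
      intro x
      by_cases h : P j x <;> simp [hψ1, hψ2, h]
    simp only [e1, e2]
    have m1 := l1.measurable
    have m2 := G.measurable_av u g j
    rw [lintegral_add_left (by fun_prop), lintegral_add_left (by fun_prop), G.lintegral_mul_av l1 hg (h0 j) (ht j),
      ih (j + 1) (l2.mono (Nat.le_succ j))]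

end Adapted

/-- Carleson embedding for the stopping cells: the sum of `A ^ p` times mass over the stopping
cells is controlled by `∫ f ^ p`. -/
lemma carleson {σ : Measure X} (h0 : ∀ j x, G.ms σ j x ≠ 0) (ht : ∀ j x, G.ms σ j x ≠ ∞)
    {f : X → ℝ≥0∞} (hf : Measurable f) {p : ℝ} (hp : 1 < p) (hfin : ∫⁻ x, f x ^ p ∂σ ≠ ∞)
    {𝒜 : ℕ → X → Prop} (h𝒜 : ∀ j, G.Lev j (𝒜 j)) (J : ℕ) :
    ∑ i ∈ Finset.range J, ∫⁻ x, chi (fun i => G.av σ f i x) (fun i => 𝒜 i x) i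
        * G.av σ f i x ^ p ∂σ
      ≤ geoC (p - 1) ^ p * ∫⁻ x, f x ^ p ∂σ := by
  have hp0 : 0 < p := by linarith
  have hA := G.lev_av σ f
  have lχ := G.lev_chi hA h𝒜
  have mχ := fun j => (lχ j).measurable
  have mA := G.measurable_av σ f
  set N := ∫⁻ x, f x ^ p ∂σ with hN
  set χ : ℕ → X → ℝ≥0∞ := fun i x => chi (fun i => G.av σ f i x) (fun i => 𝒜 i x) i with hχ
  set c : X → ℝ≥0∞ := fun x => stp (fun i => G.av σ f i x) (fun i => 𝒜 i x) J with hc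
  have mc : Measurable c := (G.lev_stp hA h𝒜 J).measurable
  set Z := ∑ i ∈ Finset.range J, ∫⁻ x, χ i x * G.av σ f i x ^ p ∂σ with hZ
  have hZint : Z = ∫⁻ x, ∑ i ∈ Finset.range J, χ i x * G.av σ f i x ^ p ∂σ := by
    rw [lintegral_finsetSum _ fun i _ => (by exact (mχ i).mul ((mA i).pow_const p))]
  have hχ1 : ∀ i x, χ i x ≤ 1 := by
    intro i x; simp only [hχ, chi]; split_ifs <;> simp
  -- The left side is finite, which allows cancelling a power of it below.
  have hZfin : Z ≠ ∞ := by
    refine (ENNReal.sum_lt_top.2 fun i _ => ?_).ne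
    refine lt_of_le_of_lt ?_ (lt_top_iff_ne_top.2 hfin)
    have := G.comp (μ := σ) (ν := σ) (j := i) (ψ := fun _ => 1) (H := fun x => G.av σ f i x ^ p)
      (K := fun x => f x ^ p) (fun _ _ _ => rfl) ((mA i).pow_const p) (hf.pow_const p) (by
        intro x _
        have l : G.Lev i (fun x => G.av σ f i x ^ p) := fun x y h => by simp only [hA i x y h]
        rw [G.setLIntegral_lev σ l]
        exact G.av_rpow_mul_le hf hp (h0 i x) (ht i x))
    simp only [one_mul] at this
    refine le_trans (lintegral_mono fun x => ?_) this
    exact mul_le_of_le_one_left' (hχ1 i x)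
  have hZ1 : Z = ∫⁻ x, f x * ∑ i ∈ Finset.range J, χ i x * G.av σ f i x ^ (p - 1) ∂σ := by
    simp only [Finset.mul_sum]
    rw [lintegral_finsetSum _ fun i _ => (by exact hf.mul ((mχ i).mul ((mA i).pow_const _)))]
    refine Finset.sum_congr rfl fun i _ => ?_
    have l : G.Lev i (fun x => χ i x * G.av σ f i x ^ (p - 1)) := fun x y h => by
      have := lχ i x y h
      simp only [hχ] at this ⊢
      rw [this, hA i x y h]
    have := G.lintegral_mul_av l hf (h0 i) (ht i)
    simp only [mul_comm (f _)]
    rw [← this]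
    refine lintegral_congr fun x => ?_
    rw [mul_assoc]
    congr 1
    conv_lhs => rw [show p = (p - 1) + 1 by ring]
    rw [ENNReal.rpow_add_of_nonneg _ _ (by linarith) (by norm_num), ENNReal.rpow_one]
  have hcp : ∫⁻ x, c x ^ p ∂σ ≤ Z := by
    rw [hZint]
    exact lintegral_mono fun x => stp_rpow_le hp0 J
  have hZ2 : Z ≤ geoC (p - 1) * (N ^ (1 / p) * Z ^ (1 - 1 / p)) := by
    calc Z ≤ ∫⁻ x, f x * (geoC (p - 1) * c x ^ (p - 1)) ∂σ := by
          rw [hZ1]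
          refine lintegral_mono fun x => ?_
          gcongr
          exact sum_chi_le (by linarith) J
      _ = geoC (p - 1) * ∫⁻ x, (f x ^ p) ^ (1 / p) * (c x ^ p) ^ (1 - 1 / p) ∂σ := by
          rw [← lintegral_const_mul _ (by fun_prop)]
          refine lintegral_congr fun x => ?_
          rw [← ENNReal.rpow_mul, ← ENNReal.rpow_mul, mul_one_div_cancel hp0.ne', ENNReal.rpow_one,
            show p * (1 - 1 / p) = p - 1 by field_simp]
          ring
      _ ≤ geoC (p - 1) * (N ^ (1 / p) * (∫⁻ x, c x ^ p ∂σ) ^ (1 - 1 / p)) := by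
          gcongr
          exact ENNReal.lintegral_mul_norm_pow_le (hf.pow_const p).aemeasurable
            (mc.pow_const p).aemeasurable (by positivity)
            (by rw [sub_nonneg, div_le_one hp0]; exact hp.le) (by ring)
      _ ≤ _ := by
          gcongr
          rw [sub_nonneg, div_le_one hp0]; exact hp.le
  rcases eq_or_ne Z 0 with hz | hz
  · rw [hz]; exact zero_le
  have h3 : Z ^ (1 / p) ≤ geoC (p - 1) * N ^ (1 / p) := by
    have e : Z = Z ^ (1 / p) * Z ^ (1 - 1 / p) := by
      rw [← ENNReal.rpow_add _ _ hz hZfin]; simp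
    rw [← mul_assoc] at hZ2
    conv_lhs at hZ2 => rw [e]
    have hne : Z ^ (1 - 1 / p) ≠ 0 := by
      simp [ENNReal.rpow_eq_zero_iff, hz, hZfin]
    have hnt : Z ^ (1 - 1 / p) ≠ ∞ := by
      simp [ENNReal.rpow_eq_top_iff, hz, hZfin]
    exact (ENNReal.mul_le_mul_iff_left hne hnt).1 hZ2
  calc Z = (Z ^ (1 / p)) ^ p := by
        rw [← ENNReal.rpow_mul, one_div_mul_cancel hp0.ne', ENNReal.rpow_one]
    _ ≤ (geoC (p - 1) * N ^ (1 / p)) ^ p := by gcongr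
    _ = _ := by
        rw [ENNReal.mul_rpow_of_nonneg _ _ hp0.le, ← ENNReal.rpow_mul, one_div_mul_cancel hp0.ne',
          ENNReal.rpow_one]

end Grid

/-! ### From testing conditions to the bilinear estimate -/

namespace Grid

variable {X ι : Type*} [MeasurableSpace X] [Countable ι] (G : Grid X ι)

/-- The tail `∑ T j * σ (Q j x)`, over generations `i ≤ j < J`, of the discretised potential
of `σ`. -/
def tail (σ : Measure X) (T : ℕ → ℝ≥0∞) (J i : ℕ) (x : X) : ℝ≥0∞ :=
  ∑ j ∈ Finset.Ico i J, T j * G.ms σ j x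

lemma measurable_tail (σ : Measure X) (T : ℕ → ℝ≥0∞) (J i : ℕ) : Measurable (G.tail σ T J i) :=
  Finset.measurable_fun_sum _ fun j _ => (G.measurable_ms σ j).const_mul (T j)

lemma chi_eq_zero_or_one (A : ℕ → ℝ≥0∞) (𝒜 : ℕ → Prop) (i : ℕ) :
    chi A 𝒜 i = 0 ∨ chi A 𝒜 i = 1 := by
  unfold chi; split_ifs <;> simp

open Classical in
/-- The part of the discretised bilinear form carried by the cells in `𝒜`, on which `f` dominates
`g`, is controlled by the testing constant `Ct` for `σ`. A stopping-time argument for the averages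
of `f` reduces it to two applications of the Carleson embedding. -/
lemma half {u σ : Measure X} (hu0 : ∀ j x, G.ms u j x ≠ 0) (hut : ∀ j x, G.ms u j x ≠ ∞)
    (hσ0 : ∀ j x, G.ms σ j x ≠ 0) (hσt : ∀ j x, G.ms σ j x ≠ ∞)
    {f g : X → ℝ≥0∞} (hf : Measurable f) (hg : Measurable g) {p q q' : ℝ} (hp : 1 < p)
    (hpq : p < q) (hqq : q.HolderConjugate q') {T : ℕ → ℝ≥0∞} {J : ℕ}
    (hf1 : ∫⁻ x, f x ^ p ∂σ ≤ 1) (hg1 : ∫⁻ x, g x ^ q' ∂u ≤ 1)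
    {𝒜 : ℕ → X → Prop} (h𝒜 : ∀ j, G.Lev j (𝒜 j))
    (hdom : ∀ j x, 𝒜 j x → G.av u g j x ^ q' * G.ms u j x ≤ G.av σ f j x ^ p * G.ms σ j x)
    {Ct : ℝ≥0∞}
    (htest : ∀ i x, ∫⁻ y in G.Q i x, G.tail σ T J i y ^ q ∂u ≤ Ct * G.ms σ i x ^ (q / p)) :
    ∑ j ∈ Finset.range J, ∫⁻ x, (if 𝒜 j x then T j * G.ms σ j x * G.av σ f j x * g x else 0) ∂u
      ≤ 2 * ((Ct * geoC (p - 1) ^ p) ^ (1 / q) * (geoC (p - 1) ^ p + 1) ^ (1 / q')) := by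
  have hp0 : 0 < p := by linarith
  have hq0 : 0 < q := hqq.pos
  have hq'0 : 0 < q' := hqq.symm.pos
  have hA := G.lev_av σ f
  have lχ := G.lev_chi hA h𝒜
  have lP := G.lev_pr hA h𝒜
  have mA := G.measurable_av σ f
  have mB := G.measurable_av u g
  have mS := G.measurable_ms σ
  have mh := G.measurable_tail σ T J
  have mc := fun j => (G.lev_stp hA h𝒜 j).measurable
  have mΓ := fun i => G.measurable_gam lP mB hg (J - i) i
  have mχ := fun i => (lχ i).measurable
  set χ : ℕ → X → ℝ≥0∞ := fun i x => chi (fun i => G.av σ f i x) (fun i => 𝒜 i x) i with hχ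
  set c : ℕ → X → ℝ≥0∞ := fun j x => stp (fun i => G.av σ f i x) (fun i => 𝒜 i x) j with hc
  set Γ : ℕ → X → ℝ≥0∞ := fun i x => gam (Pr (fun i => G.av σ f i x) (fun i => 𝒜 i x))
    (fun i => G.av u g i x) (g x) (J - i) i with hΓ
  have χ01 : ∀ i x, χ i x = 0 ∨ χ i x = 1 := fun i x => chi_eq_zero_or_one _ _ _
  set Cp := geoC (p - 1) ^ p with hCp
  have hcar : ∑ i ∈ Finset.range J, ∫⁻ x, χ i x * G.av σ f i x ^ p ∂σ ≤ Cp :=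
    (G.carleson hσ0 hσt hf hp (ne_top_of_le_ne_top one_ne_top hf1) h𝒜 J).trans
      (mul_le_of_le_one_right' hf1)
  -- the sum over all selected cells is reorganised according to the stopping cells
  have s1 : ∀ j ∈ Finset.range J,
      ∫⁻ x, (if 𝒜 j x then T j * G.ms σ j x * G.av σ f j x * g x else 0) ∂u
        ≤ ∫⁻ x, ∑ i ∈ Finset.range (j + 1),
            2 * (T j * G.ms σ j x * (χ i x * G.av σ f i x * Γ (i + 1) x)) ∂u := by
    intro j hj
    have hj := Finset.mem_range.1 hj
    have l : G.Lev (j + 1) (fun x => 2 * (T j * G.ms σ j x * c (j + 1) x)) := by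
      intro x y h
      have h1 := G.lev_stp hA h𝒜 (j + 1) x y h
      have h2 := (G.lev_ms σ j).mono (Nat.le_succ j) x y h
      simp only [hc] at h1 ⊢
      rw [h1, h2]
    calc _ ≤ ∫⁻ x, 2 * (T j * G.ms σ j x * c (j + 1) x) * g x ∂u := by
          refine lintegral_mono fun x => ?_
          simp only
          split_ifs with h
          · calc T j * G.ms σ j x * G.av σ f j x * g x
                ≤ T j * G.ms σ j x * (2 * c (j + 1) x) * g x := by
                  gcongr
                  exact le_two_mul_stp (A := fun i => G.av σ f i x) (𝒜 := fun i => 𝒜 i x) h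
              _ = _ := by ring
          · exact zero_le
      _ = ∫⁻ x, 2 * (T j * G.ms σ j x * c (j + 1) x) * Γ (j + 1) x ∂u :=
          (G.lintegral_mul_gam hu0 hut lP hg (J - (j + 1)) (j + 1) l).symm
      _ ≤ _ := by
          refine lintegral_mono fun x => ?_
          simp only [← Finset.mul_sum]
          rw [mul_assoc, mul_assoc _ (c _ _)]
          gcongr
          exact stp_mul_gam_le (A := fun i => G.av σ f i x) (𝒜 := fun i => 𝒜 i x) (j + 1) hj
  have s2 : ∑ j ∈ Finset.range J, ∫⁻ x, ∑ i ∈ Finset.range (j + 1),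
            2 * (T j * G.ms σ j x * (χ i x * G.av σ f i x * Γ (i + 1) x)) ∂u
      = 2 * ∑ i ∈ Finset.range J, ∫⁻ x, χ i x * G.av σ f i x * G.tail σ T J i x * Γ (i + 1) x ∂u := by
    have m : ∀ i j, Measurable
        (fun x => 2 * (T j * G.ms σ j x * (χ i x * G.av σ f i x * Γ (i + 1) x))) := by
      intro i j
      have := mχ i; have := mΓ (i + 1); have := mA i; have := mS j
      fun_prop
    simp only [fun j => lintegral_finsetSum (μ := u) (Finset.range (j + 1)) fun i _ => m i j]
    rw [Finset.sum_comm' (t' := Finset.range J) (s' := fun i => Finset.Ico i J) (by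
      intro j i; simp only [Finset.mem_range, Finset.mem_Ico]; omega), Finset.mul_sum]
    refine Finset.sum_congr rfl fun i _ => ?_
    have m' : Measurable (fun x => χ i x * G.av σ f i x * G.tail σ T J i x * Γ (i + 1) x) := by
      have := mχ i; have := mΓ (i + 1); have := mA i; have := mh i
      fun_prop
    rw [← lintegral_finsetSum _ fun j _ => m i j, ← lintegral_const_mul _ m']
    refine lintegral_congr fun x => ?_
    rw [← Finset.mul_sum, ← Finset.sum_mul, tail]
    ring
  -- Hölder's inequality
  have s3 : ∀ i, ∫⁻ x, χ i x * G.av σ f i x * G.tail σ T J i x * Γ (i + 1) x ∂u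
      ≤ (∫⁻ x, χ i x * G.av σ f i x ^ q * G.tail σ T J i x ^ q ∂u) ^ (1 / q)
        * (∫⁻ x, χ i x * Γ (i + 1) x ^ q' ∂u) ^ (1 / q') := by
    intro i
    have := mχ i; have := mΓ (i + 1); have := mA i; have := mh i
    refine le_trans (lintegral_mono fun x => ?_) (ENNReal.lintegral_mul_norm_pow_le
      (by fun_prop) (by fun_prop) (by positivity) (by positivity)
      (by rw [one_div, one_div]; exact hqq.inv_add_inv_eq_one))
    rcases χ01 i x with h | h
    · simp [h]
    · simp only [h, one_mul]
      rw [ENNReal.mul_rpow_of_nonneg _ _ (by positivity), ← ENNReal.rpow_mul, ← ENNReal.rpow_mul,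
        ← ENNReal.rpow_mul, mul_one_div_cancel hq0.ne', mul_one_div_cancel hq'0.ne']
      simp
  have s4 : ∑ i ∈ Finset.range J, ∫⁻ x, χ i x * G.av σ f i x ^ q * G.tail σ T J i x ^ q ∂u
      ≤ Ct * Cp := by
    refine le_trans ?_ (mul_le_mul_right hcar Ct)
    rw [Finset.mul_sum]
    refine Finset.sum_le_sum fun i _ => ?_
    have := mχ i; have := mA i; have := mS i; have := mh i
    have l : G.Lev i (fun x => χ i x * G.av σ f i x ^ q) := by
      intro x y h
      have h1 := lχ i x y h
      simp only [hχ] at h1 ⊢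
      rw [h1, hA i x y h]
    have l' : G.Lev i (fun x => Ct * G.ms σ i x ^ (q / p - 1)) := by
      intro x y h
      simp only [G.lev_ms σ i x y h]
    refine (G.comp (ν := σ) (K := fun x => Ct * G.ms σ i x ^ (q / p - 1)) l (by fun_prop)
      (by fun_prop) ?_).trans ?_
    · intro x _
      refine (htest i x).trans_eq ?_
      rw [G.setLIntegral_lev σ l', mul_assoc]
      congr 1
      change _ = _ * G.ms σ i x
      conv_lhs => rw [show q / p = (q / p - 1) + 1 by ring]
      rw [ENNReal.rpow_add _ _ (hσ0 i x) (hσt i x), ENNReal.rpow_one]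
    · rw [← lintegral_const_mul _ (by fun_prop)]
      refine lintegral_mono fun x => ?_
      have e0 : 0 ≤ (q - p) / p := by apply div_nonneg <;> linarith
      have j1 : G.av σ f i x ^ p * G.ms σ i x ≤ 1 :=
        (G.av_rpow_mul_le hf hp (hσ0 i x) (hσt i x)).trans
          ((setLIntegral_le_lintegral _ _).trans hf1)
      have j2 : G.av σ f i x ^ (q - p) * G.ms σ i x ^ (q / p - 1) ≤ 1 := by
        have := ENNReal.rpow_le_one j1 e0
        rw [ENNReal.mul_rpow_of_nonneg _ _ e0, ← ENNReal.rpow_mul] at this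
        rwa [show p * ((q - p) / p) = q - p by field_simp,
          show (q - p) / p = q / p - 1 by field_simp] at this
      calc χ i x * G.av σ f i x ^ q * (Ct * G.ms σ i x ^ (q / p - 1))
          = Ct * (χ i x * G.av σ f i x ^ p) *
            (G.av σ f i x ^ (q - p) * G.ms σ i x ^ (q / p - 1)) := by
            conv_lhs => rw [show q = p + (q - p) by ring]
            rw [ENNReal.rpow_add_of_nonneg _ _ hp0.le (by linarith)]
            ring_nf
        _ ≤ _ := mul_le_of_le_one_right' j2
  have s5 : ∑ i ∈ Finset.range J, ∫⁻ x, χ i x * Γ (i + 1) x ^ q' ∂u ≤ Cp + 1 := by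
    have m : ∀ i, Measurable (fun x => χ i x * Γ (i + 1) x ^ q') := by
      intro i; have := mχ i; have := mΓ (i + 1); fun_prop
    have m' : ∀ i, Measurable (fun x => χ i x * G.av u g i x ^ q') := by
      intro i; have := mχ i; have := mB i; fun_prop
    calc _ = ∫⁻ x, ∑ i ∈ Finset.range J, χ i x * Γ (i + 1) x ^ q' ∂u :=
          (lintegral_finsetSum _ fun i _ => m i).symm
      _ ≤ ∫⁻ x, (∑ i ∈ Finset.range J, χ i x * G.av u g i x ^ q') + g x ^ q' ∂u := by
          refine lintegral_mono fun x => ?_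
          have := sum_chi_gam (A := fun i => G.av σ f i x) (𝒜 := fun i => 𝒜 i x)
            (B := fun i => G.av u g i x) (g := g x) (e := q') (J := J) J le_rfl
          rw [Nat.sub_self, Nat.Ico_zero_eq_range] at this
          exact le_self_add.trans this.le
      _ = (∑ i ∈ Finset.range J, ∫⁻ x, χ i x * G.av u g i x ^ q' ∂u) + ∫⁻ x, g x ^ q' ∂u := by
          rw [lintegral_add_right _ (by fun_prop), lintegral_finsetSum _ fun i _ => m' i]
      _ ≤ Cp + 1 := by
          refine add_le_add (le_trans (Finset.sum_le_sum fun i _ => ?_) hcar) hg1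
          have := mB i; have := mA i
          refine G.comp (lχ i) (by fun_prop) (by fun_prop) fun x hx => ?_
          have hx' : 𝒜 i x := by
            by_contra hc
            apply hx
            exact if_neg fun h => hc h.1
          rw [G.setLIntegral_lev u (ψ := fun x => G.av u g i x ^ q')
              (fun x y h => by simp only [G.lev_av u g i x y h]),
            G.setLIntegral_lev σ (ψ := fun x => G.av σ f i x ^ p)
              (fun x y h => by simp only [hA i x y h])]
          exact hdom i x hx'
  calc _ ≤ _ := Finset.sum_le_sum s1
    _ = _ := s2
    _ ≤ 2 * ∑ i ∈ Finset.range J,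
        (∫⁻ x, χ i x * G.av σ f i x ^ q * G.tail σ T J i x ^ q ∂u) ^ (1 / q)
        * (∫⁻ x, χ i x * Γ (i + 1) x ^ q' ∂u) ^ (1 / q') := by
        gcongr with i
        exact s3 i
    _ ≤ 2 * ((∑ i ∈ Finset.range J,
          ∫⁻ x, χ i x * G.av σ f i x ^ q * G.tail σ T J i x ^ q ∂u) ^ (1 / q)
        * (∑ i ∈ Finset.range J, ∫⁻ x, χ i x * Γ (i + 1) x ^ q' ∂u) ^ (1 / q')) := by
        gcongr
        refine (ENNReal.inner_le_Lp_mul_Lq _ _ _ hqq).trans_eq ?_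
        simp only [← ENNReal.rpow_mul, one_div_mul_cancel hq0.ne', one_div_mul_cancel hq'0.ne',
          ENNReal.rpow_one]
    _ ≤ _ := by gcongr

end Grid

/-! ### Arithmetic of extended nonnegative reals -/

/-- The exponential as a bijection from `ℝ` onto the positive finite elements of `ℝ≥0∞`. It turns
monomial inequalities into linear ones. -/
def ex (s : ℝ) : ℝ≥0∞ := ENNReal.ofReal (Real.exp s)

lemma exists_ex {x : ℝ≥0∞} (h0 : x ≠ 0) (ht : x ≠ ∞) : ∃ s, x = ex s :=
  ⟨Real.log x.toReal, by
    rw [ex, Real.exp_log (ENNReal.toReal_pos h0 ht), ENNReal.ofReal_toReal ht]⟩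

lemma ex_add (s t : ℝ) : ex (s + t) = ex s * ex t := by
  rw [ex, ex, ex, Real.exp_add, ENNReal.ofReal_mul (Real.exp_pos _).le]

lemma ex_rpow (s r : ℝ) : ex s ^ r = ex (s * r) := by
  rw [ex, ex, ENNReal.ofReal_rpow_of_pos (Real.exp_pos _), Real.exp_mul]

lemma ex_div (s t : ℝ) : ex s / ex t = ex (s - t) := by
  rw [ex, ex, ex, Real.exp_sub, ENNReal.ofReal_div_of_pos (Real.exp_pos _)]

lemma ex_inv (s : ℝ) : (ex s)⁻¹ = ex (-s) := by
  rw [ex, ex, Real.exp_neg, ENNReal.ofReal_inv_of_pos (Real.exp_pos _)]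

lemma ex_le {s t : ℝ} : ex s ≤ ex t ↔ s ≤ t := by
  rw [ex, ex, ENNReal.ofReal_le_ofReal_iff (Real.exp_pos _).le, Real.exp_le_exp]

lemma ex_ne_zero (s : ℝ) : ex s ≠ 0 := by
  rw [ex, Ne, ENNReal.ofReal_eq_zero, not_le]; exact Real.exp_pos _

lemma ex_ne_top (s : ℝ) : ex s ≠ ∞ := ENNReal.ofReal_ne_top

/-- Convexity of `t ↦ t ^ q`. -/
lemma add_rpow_le {q : ℝ} (hq : 1 < q) (x y : ℝ≥0∞) :
    (x + y) ^ q ≤ y ^ q + ENNReal.ofReal q * (x * (x + y) ^ (q - 1)) := by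
  have hq0 : 0 < q := by linarith
  rcases eq_or_ne y ∞ with rfl | hy
  · simp [hq0]
  rcases eq_or_ne x ∞ with rfl | hx
  · have : (∞ : ℝ≥0∞) * ∞ ^ (q - 1) = ∞ := by
      rw [ENNReal.top_rpow_of_pos (by linarith)]; simp
    simp [this, ENNReal.mul_top, hq0]
  rcases eq_or_ne x 0 with rfl | hx0
  · simp
  lift x to NNReal using hx
  lift y to NNReal using hy
  have hx1 : 0 < x := by
    rw [pos_iff_ne_zero]; intro h; exact hx0 (by simp [h])
  have hs : 0 < (x : ℝ) + y := add_pos_of_pos_of_nonneg (by exact_mod_cast hx1) y.coe_nonneg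
  have hb := one_add_mul_self_le_rpow_one_add (s := -(x / (x + y) : ℝ)) (p := q)
    (by rw [neg_le_neg_iff, div_le_one hs]; linarith [y.coe_nonneg]) hq.le
  have key : ((x : ℝ) + y) ^ q ≤ (y : ℝ) ^ q + q * (x * ((x : ℝ) + y) ^ (q - 1)) := by
    have e1 : (1 + -(x / (x + y) : ℝ)) = y / (x + y) := by field_simp; ring
    rw [e1, Real.div_rpow y.coe_nonneg hs.le, le_div_iff₀ (by positivity)] at hb
    have e2 : ((x : ℝ) + y) ^ q = ((x : ℝ) + y) * ((x : ℝ) + y) ^ (q - 1) := by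
      rw [← Real.rpow_one_add' hs.le (by linarith)]; ring_nf
    rw [e2] at hb ⊢
    have e3 : (1 + q * -(x / (x + y) : ℝ)) * (((x : ℝ) + y) * ((x : ℝ) + y) ^ (q - 1)) =
        ((x : ℝ) + y) * ((x : ℝ) + y) ^ (q - 1) - q * (x * ((x : ℝ) + y) ^ (q - 1)) := by
      field_simp; ring
    rw [e3] at hb
    linarith
  have := ENNReal.ofReal_le_ofReal key
  rw [ENNReal.ofReal_add (by positivity) (by positivity), ENNReal.ofReal_mul hq0.le,
    ENNReal.ofReal_mul x.coe_nonneg, ← ENNReal.ofReal_rpow_of_pos hs, ← ENNReal.ofReal_rpow_of_pos hs,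
    ← ENNReal.ofReal_rpow_of_nonneg y.coe_nonneg hq0.le, ENNReal.ofReal_add x.coe_nonneg y.coe_nonneg] at this
  simpa using this

/-- The power of a tail sum is controlled by a sum of powers of its terms over tails. -/
lemma tail_sum_rpow_le {q : ℝ} (hq : 1 < q) (α : ℕ → ℝ≥0∞) (J k : ℕ) (hk : k ≤ J) :
    (∑ j ∈ Finset.Ico (J - k) J, α j) ^ q ≤ ENNReal.ofReal q *
      ∑ j ∈ Finset.Ico (J - k) J, α j * (∑ l ∈ Finset.Ico j J, α l) ^ (q - 1) := by
  induction k with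
  | zero => simp [show 0 < q by linarith]
  | succ k ih =>
    have ih := ih (by omega)
    obtain ⟨j, hj⟩ : ∃ j, j = J - (k + 1) := ⟨_, rfl⟩
    have h1 : J - k = j + 1 := by omega
    have key : ∀ F : ℕ → ℝ≥0∞, ∑ i ∈ Finset.Ico j J, F i = F j + ∑ i ∈ Finset.Ico (j + 1) J, F i :=
      fun F => Finset.sum_eq_sum_Ico_succ_bot (by omega) F
    rw [← hj, key (fun j => α j * (∑ l ∈ Finset.Ico j J, α l) ^ (q - 1))]
    rw [h1] at ih
    rw [key α, mul_add, add_comm (ENNReal.ofReal q * _)]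
    exact (add_rpow_le hq _ _).trans (add_le_add ih le_rfl)

lemma sum_Ico_rpow_le {m : ℝ} (hm : 0 < m) {ω : ℝ≥0∞} (h0 : ω ≠ 0) (ht : ω ≠ ∞)
    (α : ℕ → ℝ≥0∞) (j J : ℕ) :
    (∑ l ∈ Finset.Ico j J, α l) ^ m ≤
      (1 - ω ^ (1 / m))⁻¹ ^ m * ∑ l ∈ Finset.Ico j J, (ω ^ (l - j))⁻¹ * α l ^ m := by
  set M := ∑ l ∈ Finset.Ico j J, (ω ^ (l - j))⁻¹ * α l ^ m with hM
  have h1 : ∀ l ∈ Finset.Ico j J, α l ≤ M ^ (1 / m) * (ω ^ (1 / m)) ^ (l - j) := by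
    intro l hl
    have h2 : (ω ^ (l - j))⁻¹ * α l ^ m ≤ M :=
      Finset.single_le_sum (f := fun l => (ω ^ (l - j))⁻¹ * α l ^ m) (fun _ _ => zero_le) hl
    have h3 : α l ^ m ≤ M * ω ^ (l - j) := by
      rw [← ENNReal.div_eq_inv_mul] at h2
      exact (ENNReal.div_le_iff (pow_ne_zero _ h0) (ENNReal.pow_ne_top ht)).1 h2
    calc α l = (α l ^ m) ^ (1 / m) := by
          rw [← ENNReal.rpow_mul, mul_one_div_cancel hm.ne', ENNReal.rpow_one]
      _ ≤ (M * ω ^ (l - j)) ^ (1 / m) := by gcongr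
      _ = _ := by
          rw [ENNReal.mul_rpow_of_nonneg _ _ (by positivity), ← ENNReal.rpow_natCast,
            ← ENNReal.rpow_natCast, ← ENNReal.rpow_mul, ← ENNReal.rpow_mul, mul_comm (1 / m)]
  have h4 : ∑ l ∈ Finset.Ico j J, α l ≤ M ^ (1 / m) * (1 - ω ^ (1 / m))⁻¹ := by
    refine (Finset.sum_le_sum h1).trans ?_
    rw [← Finset.mul_sum, ← ENNReal.tsum_geometric]
    gcongr
    rw [Finset.sum_Ico_eq_sum_range]
    simp only [Nat.add_sub_cancel_left]
    exact ENNReal.sum_le_tsum _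
  calc _ ≤ (M ^ (1 / m) * (1 - ω ^ (1 / m))⁻¹) ^ m := by gcongr
    _ = _ := by
      rw [ENNReal.mul_rpow_of_nonneg _ _ hm.le, ← ENNReal.rpow_mul, one_div_mul_cancel hm.ne',
        ENNReal.rpow_one, mul_comm]

/-- If a sequence decreases at a fixed relative rate `r`, then so do its powers. -/
lemma rpow_decay {γ : ℝ} (hγ : 0 < γ) {x y r : ℝ≥0∞} (hx0 : x ≠ 0) (hx : x ≠ ∞)
    (h : y + r * x ≤ x) :
    y ^ γ + ENNReal.ofReal (min 1 γ) * r * x ^ γ ≤ x ^ γ := by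
  have hr1 : r ≤ 1 := by
    have : r * x ≤ 1 * x := by rw [one_mul]; exact le_add_self.trans h
    exact (ENNReal.mul_le_mul_iff_left hx0 hx).1 this
  have hrt : r ≠ ∞ := ne_top_of_le_ne_top one_ne_top hr1
  have hc : 0 < min 1 γ := lt_min one_pos hγ
  lift r to NNReal using hrt
  have hr1' : (r : ℝ) ≤ 1 := by exact_mod_cast hr1
  have hy : y ≤ ENNReal.ofReal (1 - r) * x := by
    have e : ENNReal.ofReal (1 - r) = 1 - r := by
      rw [ENNReal.ofReal_sub _ r.coe_nonneg]; simp
    rw [e, ENNReal.sub_mul (by simp [hx]), one_mul]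
    exact ENNReal.le_sub_of_add_le_right (ENNReal.mul_ne_top coe_ne_top hx) h
  have hreal : (1 - (r : ℝ)) ^ γ + min 1 γ * r ≤ 1 := by
    rcases le_total 1 γ with h1 | h1
    · rw [min_eq_left h1]
      have := Real.rpow_le_rpow_of_exponent_ge' (sub_nonneg.2 hr1') (by linarith [r.coe_nonneg])
        zero_le_one h1
      rw [Real.rpow_one] at this
      linarith
    · rw [min_eq_right h1]
      have := rpow_one_add_le_one_add_mul_self (s := -(r : ℝ)) (by linarith) hγ.le h1
      rw [← sub_eq_add_neg] at this
      linarith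
  have h2 := ENNReal.ofReal_le_ofReal hreal
  rw [ENNReal.ofReal_add (Real.rpow_nonneg (sub_nonneg.2 hr1') _)
    (mul_nonneg hc.le r.coe_nonneg), ENNReal.ofReal_mul hc.le,
    ← ENNReal.ofReal_rpow_of_nonneg (sub_nonneg.2 hr1') hγ.le, ENNReal.ofReal_coe_nnreal,
    ENNReal.ofReal_one] at h2
  calc _ ≤ (ENNReal.ofReal (1 - r) * x) ^ γ + ENNReal.ofReal (min 1 γ) * r * x ^ γ := by gcongr
    _ = (ENNReal.ofReal (1 - r) ^ γ + ENNReal.ofReal (min 1 γ) * r) * x ^ γ := by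
      rw [ENNReal.mul_rpow_of_nonneg _ _ hγ.le]; ring
    _ ≤ 1 * x ^ γ := by gcongr
    _ = _ := one_mul _

lemma sum_rpow_decay {γ : ℝ} (hγ : 0 < γ) {S : ℕ → ℝ≥0∞} {r : ℝ≥0∞} (h0 : ∀ j, S j ≠ 0)
    (ht : ∀ j, S j ≠ ∞) (h : ∀ j, S (j + 1) + r * S j ≤ S j) (i k : ℕ) :
    ENNReal.ofReal (min 1 γ) * r * ∑ j ∈ Finset.Ico i (i + k), S j ^ γ + S (i + k) ^ γ
      ≤ S i ^ γ := by
  induction k with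
  | zero => simp
  | succ k ih =>
    refine le_trans ?_ ih
    rw [← add_assoc, Finset.sum_Ico_succ_top (by omega), mul_add, add_assoc]
    gcongr
    rw [add_comm]
    exact rpow_decay hγ (h0 _) (ht _) (h _)

/-! ### The testing condition -/

namespace Grid

variable {X ι : Type*} [MeasurableSpace X] [Countable ι] (G : Grid X ι)

/-- A pair of measures `u`, `σ` satisfying a two-weight `A_{p,q}`-type condition with constant `K`
on the cells of `G`, where `a = 1 / q`, `b = 1 / p'`. The cells of generation `j` have size `V j`,
decaying geometrically with ratio `θ`; passing to a child removes at least the proportion `ru`,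
respectively `rσ`, of the mass. -/
structure Pair (u σ : Measure X) (V : ℕ → ℝ≥0∞) (θ : ℝ≥0∞) (a b : ℝ) (K ru rσ : ℝ≥0∞) : Prop where
  u0 : ∀ j x, G.ms u j x ≠ 0
  ut : ∀ j x, G.ms u j x ≠ ∞
  s0 : ∀ j x, G.ms σ j x ≠ 0
  st : ∀ j x, G.ms σ j x ≠ ∞
  V0 : ∀ j, V j ≠ 0
  Vt : ∀ j, V j ≠ ∞
  K0 : K ≠ 0
  Kt : K ≠ ∞
  Vθ : ∀ j k, V (j + k) = θ ^ k * V j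
  H1 : ∀ j x, G.ms u j x ^ a * G.ms σ j x ^ b ≤ K * V j ^ (a + b)
  Hu : ∀ j x, G.ms u (j + 1) x + ru * G.ms u j x ≤ G.ms u j x
  Hσ : ∀ j x, G.ms σ (j + 1) x + rσ * G.ms σ j x ≤ G.ms σ j x

variable {G}

lemma Pair.symm {u σ : Measure X} {V : ℕ → ℝ≥0∞} {θ : ℝ≥0∞} {a b : ℝ} {K ru rσ : ℝ≥0∞}
    (h : G.Pair u σ V θ a b K ru rσ) : G.Pair σ u V θ b a K rσ ru :=
  { u0 := h.s0, ut := h.st, s0 := h.u0, st := h.ut, V0 := h.V0, Vt := h.Vt, K0 := h.K0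
    Kt := h.Kt, Vθ := h.Vθ
    H1 := fun j x => by rw [mul_comm, add_comm]; exact h.H1 j x
    Hu := h.Hσ, Hσ := h.Hu }

lemma Pair.ms_mono {μ : Measure X} {j l : ℕ} (hjl : j ≤ l) (x : X) : G.ms μ l x ≤ G.ms μ j x :=
  measure_mono (G.Q_anti hjl x)

lemma Pair.lintegral_ratio {u σ : Measure X} {V : ℕ → ℝ≥0∞} {θ : ℝ≥0∞} {a b : ℝ}
    {K ru rσ : ℝ≥0∞} (h : G.Pair u σ V θ a b K ru rσ) {j l : ℕ} (hjl : j ≤ l) (x : X) :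
    ∫⁻ y in G.Q j x, G.ms σ l y / G.ms u l y ∂u ≤ G.ms σ j x := by
  have m1 := G.measurable_ms σ l
  have m2 := G.measurable_ms u l
  have := G.comp_on (μ := u) (ν := σ) hjl x (ψ := fun _ => 1)
    (H := fun y => G.ms σ l y / G.ms u l y) (K := fun _ => 1) (fun _ _ _ => rfl) (by fun_prop)
    (by fun_prop) (by
      intro y
      have l : G.Lev l (fun y => G.ms σ l y / G.ms u l y) := fun y z hyz => by
        simp only [G.lev_ms σ l y z hyz, G.lev_ms u l y z hyz]
      rw [G.setLIntegral_lev u l]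
      change _ / _ * G.ms u _ y ≤ _
      rw [ENNReal.div_mul_cancel (h.u0 _ y) (h.ut _ y)]
      simp [ms])
  simpa [ms] using this

/-- Interaction of two generations `j ≤ l`, with geometric decay in `l - j`. Only the
`A_{p,q}`-type condition and Jensen's inequality are used; `t` interpolates between the
two available bounds. -/
lemma Pair.two_gen {u σ : Measure X} {V : ℕ → ℝ≥0∞} {θ : ℝ≥0∞} {a b : ℝ}
    {K ru rσ : ℝ≥0∞} (h : G.Pair u σ V θ a b K ru rσ) {q t : ℝ} (hq : a * q = 1)
    (ht0 : 0 ≤ t) (htq : t ≤ q) (ha : 0 < a) (ht : (a + b) * t ≤ q - 1)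
    (j k : ℕ) (x : X) :
    V j ^ (-(a + b)) * G.ms σ j x *
        ∫⁻ y in G.Q j x, (V (j + k) ^ (-(a + b)) * G.ms σ (j + k) y) ^ (q - 1) ∂u
      ≤ (θ ^ ((a + b) * (t - q + 1))) ^ k * (K ^ q * G.ms σ j x ^ (q * (1 - b))) := by
  set l := j + k with hl
  have hjl : j ≤ l := by omega
  have hat : a * t ≤ 1 := by nlinarith
  obtain ⟨κ, hκ⟩ := exists_ex h.K0 h.Kt
  obtain ⟨v, hv⟩ := exists_ex (h.V0 j) (h.Vt j)
  obtain ⟨vl, hvl⟩ := exists_ex (h.V0 l) (h.Vt l)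
  obtain ⟨A, hA⟩ := exists_ex (h.u0 j x) (h.ut j x)
  obtain ⟨B, hB⟩ := exists_ex (h.s0 j x) (h.st j x)
  have hH := h.H1 j x
  rw [hκ, hv, hA, hB, ex_rpow, ex_rpow, ex_rpow, ← ex_add, ← ex_add, ex_le] at hH
  have m1 := G.measurable_ms σ l
  have m2 := G.measurable_ms u l
  have p1 : ∀ y ∈ G.Q j x, (V l ^ (-(a + b)) * G.ms σ l y) ^ (q - 1) ≤
      K ^ t * V l ^ ((a + b) * (t - q + 1)) * G.ms σ j x ^ (q - 1 - (a + b) * t) *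
        (G.ms σ l y / G.ms u l y) ^ (a * t) := by
    intro y hy
    obtain ⟨A', hA'⟩ := exists_ex (h.u0 l y) (h.ut l y)
    obtain ⟨B', hB'⟩ := exists_ex (h.s0 l y) (h.st l y)
    have hH' := h.H1 l y
    have hm : G.ms σ l y ≤ G.ms σ j x := by
      rw [← G.lev_ms σ j y x hy]; exact ms_mono hjl y
    rw [hκ, hvl, hA', hB', ex_rpow, ex_rpow, ex_rpow, ← ex_add, ← ex_add, ex_le] at hH'
    rw [hB', hB, ex_le] at hm
    simp only [hκ, hvl, hA', hB', hB, ex_rpow, ex_div, ← ex_add, ex_le]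
    nlinarith [mul_le_mul_of_nonneg_left hH' ht0,
      mul_le_mul_of_nonneg_left hm (sub_nonneg.2 ht)]
  have p2 : ∫⁻ y in G.Q j x, (G.ms σ l y / G.ms u l y) ^ (a * t) ∂u ≤
      G.ms σ j x ^ (a * t) * G.ms u j x ^ (1 - a * t) := by
    have := ENNReal.lintegral_mul_norm_pow_le (μ := u.restrict (G.Q j x))
      (f := fun y => G.ms σ l y / G.ms u l y) (g := fun _ => 1) (p := a * t) (q := 1 - a * t)
      (by fun_prop) aemeasurable_const (by positivity) (by linarith) (by ring)
    simp only [ENNReal.one_rpow, mul_one, lintegral_const, Measure.restrict_apply_univ,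
      one_mul] at this
    refine this.trans ?_
    change _ * G.ms u j x ^ _ ≤ _
    gcongr
    exact h.lintegral_ratio hjl x
  have p3 : ∫⁻ y in G.Q j x, (V l ^ (-(a + b)) * G.ms σ l y) ^ (q - 1) ∂u ≤
      K ^ t * V l ^ ((a + b) * (t - q + 1)) * G.ms σ j x ^ (q - 1 - (a + b) * t) *
        (G.ms σ j x ^ (a * t) * G.ms u j x ^ (1 - a * t)) := by
    refine (setLIntegral_mono (by fun_prop) p1).trans ?_
    rw [lintegral_const_mul _ (by fun_prop)]
    gcongr
  refine (mul_le_mul_right p3 _).trans ?_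
  have hθ : (θ ^ ((a + b) * (t - q + 1))) ^ k =
      V l ^ ((a + b) * (t - q + 1)) * V j ^ (-((a + b) * (t - q + 1))) := by
    have e : θ ^ k = V l / V j := by
      rw [hl, h.Vθ, ENNReal.mul_div_cancel_right (h.V0 j) (h.Vt j)]
    rw [← ENNReal.rpow_natCast, ← ENNReal.rpow_mul, mul_comm _ (k : ℝ), ENNReal.rpow_mul,
      ENNReal.rpow_natCast, e, hvl, hv, ex_div, ex_rpow, ex_rpow, ex_rpow, ← ex_add]
    congr 1; ring
  rw [hθ]
  simp only [hκ, hv, hvl, hA, hB, ex_rpow, ← ex_add, ex_le]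
  have e1 : A * (1 - a * t) = A * a * (q - t) := by
    rw [← hq]; ring
  have := mul_le_mul_of_nonneg_right hH (sub_nonneg.2 htq)
  nlinarith [e1, this]

/-- The testing condition, uniformly over grids: the constant depends on `a`, `b`, `θ` only. -/
lemma exists_testing (X ι : Type*) [MeasurableSpace X] [Countable ι] {a b : ℝ} (ha : 0 < a)
    (hb : 0 < b) (hab : a + b < 1) {θ : ℝ≥0∞} (hθ0 : θ ≠ 0) (hθ1 : θ < 1) :
    ∃ C : ℝ≥0∞, C ≠ ∞ ∧ ∀ (G : Grid X ι) (u σ : Measure X) (V : ℕ → ℝ≥0∞) (K ru rσ : ℝ≥0∞),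
      G.Pair u σ V θ a b K ru rσ → ∀ (J i : ℕ) (x : X),
        rσ * ∫⁻ y in G.Q i x, G.tail σ (fun j => V j ^ (-(a + b))) J i y ^ (1 / a) ∂u ≤
          C * K ^ (1 / a) * G.ms σ i x ^ (1 / a * (1 - b)) := by
  obtain ⟨q, hqd⟩ : ∃ q, q = 1 / a := ⟨_, rfl⟩
  have haq : a * q = 1 := by rw [hqd]; field_simp
  have hq : 1 < q := by rw [hqd, lt_div_iff₀ ha]; linarith
  rw [← hqd]
  have hβ : 0 < a + b := by linarith
  obtain ⟨t, htd⟩ : ∃ t, t = min q ((q - 1) / (a + b)) := ⟨_, rfl⟩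
  have htq : t ≤ q := htd ▸ min_le_left _ _
  have ht1 : (a + b) * t ≤ q - 1 := by
    have : t ≤ (q - 1) / (a + b) := htd ▸ min_le_right _ _
    rwa [le_div_iff₀ hβ, mul_comm] at this
  have htm : q - 1 < t := by
    rw [htd, lt_min_iff, lt_div_iff₀ hβ]
    constructor
    · linarith
    · nlinarith
  obtain ⟨ω, hω⟩ : ∃ ω, ω = θ ^ ((a + b) * (t - q + 1) / 2) := ⟨_, rfl⟩
  have he : 0 < (a + b) * (t - q + 1) / 2 := by
    apply div_pos (mul_pos hβ (by linarith)) two_pos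
  have hθt : θ ≠ ∞ := (hθ1.trans one_lt_top).ne
  have hω0 : ω ≠ 0 := by rw [hω]; simp [ENNReal.rpow_eq_zero_iff, hθ0, hθt]
  have hω1 : ω < 1 := by rw [hω]; exact ENNReal.rpow_lt_one hθ1 he
  have hωt : ω ≠ ∞ := (hω1.trans one_lt_top).ne
  have hωκ : θ ^ ((a + b) * (t - q + 1)) = ω * ω := by
    rw [hω, ← ENNReal.rpow_add _ _ hθ0 hθt]; congr 1; ring
  obtain ⟨γ, hγd⟩ : ∃ γ, γ = q * (1 - b) - 1 := ⟨_, rfl⟩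
  have hγ : 0 < γ := by rw [hγd]; nlinarith
  have hc : 0 < min 1 γ := lt_min one_pos hγ
  set C1 := (1 - ω ^ (1 / (q - 1)))⁻¹ ^ (q - 1) with hC1
  have hωm : ω ^ (1 / (q - 1)) < 1 := ENNReal.rpow_lt_one hω1 (by
    apply div_pos one_pos; linarith)
  have hC1t : C1 ≠ ∞ := by
    refine ENNReal.rpow_ne_top_of_nonneg (by linarith) ?_
    rw [ENNReal.inv_ne_top]
    exact (tsub_pos_of_lt hωm).ne'
  refine ⟨ENNReal.ofReal q * C1 * (1 - ω)⁻¹ * (ENNReal.ofReal (min 1 γ))⁻¹, ?_, ?_⟩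
  · refine ENNReal.mul_ne_top (ENNReal.mul_ne_top (ENNReal.mul_ne_top ofReal_ne_top hC1t) ?_) ?_
    · rw [ENNReal.inv_ne_top]
      exact (tsub_pos_of_lt hω1).ne'
    · rw [ENNReal.inv_ne_top]
      simpa using hc
  intro G u σ V K ru rσ h J i x
  rcases le_or_gt J i with hJi | hij
  · simp only [tail, Finset.Ico_eq_empty_of_le hJi, Finset.sum_empty]
    rw [ENNReal.zero_rpow_of_pos (by linarith)]
    simp
  obtain ⟨α, hα⟩ : ∃ α : ℕ → X → ℝ≥0∞, α = fun j y => V j ^ (-(a + b)) * G.ms σ j y := ⟨_, rfl⟩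
  have mα : ∀ j, Measurable (α j) := fun j => by
    rw [hα]; exact (G.measurable_ms σ j).const_mul _
  have mS := G.measurable_ms σ
  have lα : ∀ j, G.Lev j (α j) := fun j y z hyz => by
    simp only [hα, G.lev_ms σ j y z hyz]
  have tail_eq : ∀ y, G.tail σ (fun j => V j ^ (-(a + b))) J i y = ∑ j ∈ Finset.Ico i J, α j y := by
    intro y; simp only [tail, hα]
  have p1 : ∀ y, G.tail σ (fun j => V j ^ (-(a + b))) J i y ^ q ≤
      ∑ j ∈ Finset.Ico i J, ∑ l ∈ Finset.Ico j J,
        ENNReal.ofReal q * C1 * (ω ^ (l - j))⁻¹ * (α j y * α l y ^ (q - 1)) := by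
    intro y
    rw [tail_eq]
    have := tail_sum_rpow_le hq (fun j => α j y) J (J - i) (by omega)
    rw [show J - (J - i) = i by omega] at this
    refine this.trans ?_
    rw [Finset.mul_sum]
    refine Finset.sum_le_sum fun j _ => ?_
    refine (mul_le_mul_right (mul_le_mul_right (sum_Ico_rpow_le (m := q - 1) (by linarith)
      hω0 hωt _ _ _) _) _).trans_eq ?_
    rw [← hC1, Finset.mul_sum, Finset.mul_sum, Finset.mul_sum]
    refine Finset.sum_congr rfl fun l _ => ?_
    ring
  have p2 : ∀ j k, i ≤ j → ∫⁻ y in G.Q i x, α j y * α (j + k) y ^ (q - 1) ∂u ≤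
      (ω * ω) ^ k * K ^ q * ∫⁻ y in G.Q i x, G.ms σ j y ^ γ ∂σ := by
    intro j k hij
    have mj := mα j
    have mk := mα (j + k)
    have mSj := mS j
    rw [← lintegral_const_mul _ (by fun_prop)]
    have := G.comp_on (μ := u) (ν := σ) hij x (ψ := fun _ => 1)
      (H := fun y => α j y * α (j + k) y ^ (q - 1))
      (K := fun y => (ω * ω) ^ k * K ^ q * G.ms σ j y ^ γ) (fun _ _ _ => rfl) (by fun_prop)
      (by fun_prop) ?_
    · simpa using this
    intro z
    have l1 : G.Lev j (fun y => (ω * ω) ^ k * K ^ q * G.ms σ j y ^ γ) := fun y w hyw => by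
      simp only [G.lev_ms σ j y w hyw]
    rw [G.setLIntegral_lev σ l1]
    have e1 : ∫⁻ y in G.Q j z, α j y * α (j + k) y ^ (q - 1) ∂u =
        α j z * ∫⁻ y in G.Q j z, α (j + k) y ^ (q - 1) ∂u := by
      rw [← lintegral_const_mul _ (by fun_prop)]
      exact setLIntegral_congr_fun (G.measQ j z) fun y hy => by simp only [lα j y z hy]
    have e2 := h.two_gen haq (by linarith) htq ha ht1 j k z
    rw [e1]
    simp only [hα]
    refine e2.trans_eq ?_
    rw [hωκ]
    change _ = _ * G.ms σ j z
    rw [show q * (1 - b) = γ + 1 by rw [hγd]; ring, ENNReal.rpow_add _ _ (h.s0 j z) (h.st j z),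
      ENNReal.rpow_one]
    ring
  have p3 : ∫⁻ y in G.Q i x, G.tail σ (fun j => V j ^ (-(a + b))) J i y ^ q ∂u ≤
      ENNReal.ofReal q * C1 * (1 - ω)⁻¹ * K ^ q *
        ∫⁻ y in G.Q i x, ∑ j ∈ Finset.Ico i J, G.ms σ j y ^ γ ∂σ := by
    refine (lintegral_mono p1).trans ?_
    have mm : ∀ j l, Measurable (fun y =>
        ENNReal.ofReal q * C1 * (ω ^ (l - j))⁻¹ * (α j y * α l y ^ (q - 1))) := by
      intro j l
      have := mα j; have := mα l
      fun_prop
    rw [lintegral_finsetSum _ fun j _ => Finset.measurable_fun_sum _ fun l _ => mm j l,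
      lintegral_finsetSum _ fun j _ => (by have := mS j; fun_prop), Finset.mul_sum]
    refine Finset.sum_le_sum fun j hj => ?_
    have hij' := (Finset.mem_Ico.1 hj).1
    rw [lintegral_finsetSum _ fun l _ => mm j l]
    calc _ ≤ ∑ l ∈ Finset.Ico j J, ω ^ (l - j) *
          (ENNReal.ofReal q * C1 * K ^ q * ∫⁻ y in G.Q i x, G.ms σ j y ^ γ ∂σ) := by
          refine Finset.sum_le_sum fun l hl => ?_
          obtain ⟨k, rfl⟩ := Nat.exists_eq_add_of_le (Finset.mem_Ico.1 hl).1
          have := mα j; have := mα (j + k)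
          rw [lintegral_const_mul _ (by fun_prop), Nat.add_sub_cancel_left]
          refine (mul_le_mul_right (p2 j k hij') _).trans_eq ?_
          rw [mul_pow]
          have : (ω ^ k)⁻¹ * ω ^ k = 1 :=
            ENNReal.inv_mul_cancel (pow_ne_zero _ hω0) (ENNReal.pow_ne_top hωt)
          calc _ = ((ω ^ k)⁻¹ * ω ^ k) * (ω ^ k * (ENNReal.ofReal q * C1 * K ^ q *
                ∫⁻ y in G.Q i x, G.ms σ j y ^ γ ∂σ)) := by ring
            _ = _ := by rw [this, one_mul]
      _ ≤ (1 - ω)⁻¹ * (ENNReal.ofReal q * C1 * K ^ q * ∫⁻ y in G.Q i x, G.ms σ j y ^ γ ∂σ) := by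
          rw [← Finset.sum_mul, ← ENNReal.tsum_geometric, Finset.sum_Ico_eq_sum_range]
          refine mul_le_mul_left ?_ _
          simp only [Nat.add_sub_cancel_left]
          exact ENNReal.sum_le_tsum _
      _ = _ := by ring
  have p4 : ENNReal.ofReal (min 1 γ) * rσ *
      ∫⁻ y in G.Q i x, ∑ j ∈ Finset.Ico i J, G.ms σ j y ^ γ ∂σ ≤ G.ms σ i x ^ (q * (1 - b)) := by
    rw [← lintegral_const_mul _ (Finset.measurable_fun_sum _ fun j _ => (mS j).pow_const γ)]
    calc _ ≤ ∫⁻ y in G.Q i x, G.ms σ i y ^ γ ∂σ := by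
          refine lintegral_mono fun y => ?_
          have := sum_rpow_decay hγ (fun j => h.s0 j y) (fun j => h.st j y) (fun j => h.Hσ j y)
            i (J - i)
          rw [show i + (J - i) = J by omega] at this
          exact le_self_add.trans this
      _ = _ := by
          rw [G.setLIntegral_lev σ (ψ := fun y => G.ms σ i y ^ γ)
            (fun y z hyz => by simp only [G.lev_ms σ i y z hyz])]
          change _ * G.ms σ i x = _
          rw [show q * (1 - b) = γ + 1 by rw [hγd]; ring,
            ENNReal.rpow_add _ _ (h.s0 i x) (h.st i x), ENNReal.rpow_one]
  have hcc : (ENNReal.ofReal (min 1 γ))⁻¹ * ENNReal.ofReal (min 1 γ) = 1 :=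
    ENNReal.inv_mul_cancel (by simpa using hc) ofReal_ne_top
  calc _ ≤ rσ * (ENNReal.ofReal q * C1 * (1 - ω)⁻¹ * K ^ q *
        ∫⁻ y in G.Q i x, ∑ j ∈ Finset.Ico i J, G.ms σ j y ^ γ ∂σ) := by gcongr
    _ = ((ENNReal.ofReal (min 1 γ))⁻¹ * ENNReal.ofReal (min 1 γ)) *
        (rσ * (ENNReal.ofReal q * C1 * (1 - ω)⁻¹ * K ^ q *
        ∫⁻ y in G.Q i x, ∑ j ∈ Finset.Ico i J, G.ms σ j y ^ γ ∂σ)) := by rw [hcc, one_mul]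
    _ = (ENNReal.ofReal q * C1 * (1 - ω)⁻¹ * (ENNReal.ofReal (min 1 γ))⁻¹ * K ^ q) *
        (ENNReal.ofReal (min 1 γ) * rσ *
      ∫⁻ y in G.Q i x, ∑ j ∈ Finset.Ico i J, G.ms σ j y ^ γ ∂σ) := by ring
    _ ≤ _ := by gcongr

end Grid

/-! ### The bilinear estimate on a grid -/

namespace Grid

variable {X ι : Type*} [MeasurableSpace X] [Countable ι] (G : Grid X ι)

/-- The discretised bilinear form `∑ T j * ∫_Q f dσ * ∫_Q g du`, summed over the cells `Q` of all
generations `j < J`. -/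
def form (u σ : Measure X) (T : ℕ → ℝ≥0∞) (J : ℕ) (f g : X → ℝ≥0∞) : ℝ≥0∞ :=
  ∑ j ∈ Finset.range J, ∫⁻ x, T j * (∫⁻ y in G.Q j x, f y ∂σ) * g x ∂u

lemma lev_cell (σ : Measure X) (f : X → ℝ≥0∞) (j : ℕ) :
    G.Lev j (fun x => ∫⁻ y in G.Q j x, f y ∂σ) := fun x y h => by
  simp only [G.Q_congr h]

lemma measurable_cell (σ : Measure X) (f : X → ℝ≥0∞) (j : ℕ) :
    Measurable (fun x => ∫⁻ y in G.Q j x, f y ∂σ) := (G.lev_cell σ f j).measurable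

lemma ms_mul_av {σ : Measure X} {f : X → ℝ≥0∞} {j : ℕ} {x : X} (h0 : G.ms σ j x ≠ 0)
    (ht : G.ms σ j x ≠ ∞) : G.ms σ j x * G.av σ f j x = ∫⁻ y in G.Q j x, f y ∂σ :=
  ENNReal.mul_div_cancel h0 ht

lemma exists_form_le_one (X ι : Type*) [MeasurableSpace X] [Countable ι] {a b : ℝ} (ha : 0 < a)
    (hb : 0 < b) (hab : a + b < 1) {θ : ℝ≥0∞} (hθ0 : θ ≠ 0) (hθ1 : θ < 1) :
    ∃ C : ℝ≥0∞, C ≠ ∞ ∧ ∀ (G : Grid X ι) (u σ : Measure X) (V : ℕ → ℝ≥0∞) (K ru rσ : ℝ≥0∞),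
      G.Pair u σ V θ a b K ru rσ → ru ≠ 0 → ru ≠ ∞ → rσ ≠ 0 → rσ ≠ ∞ →
      ∀ (J : ℕ) (f g : X → ℝ≥0∞), Measurable f → Measurable g →
        ∫⁻ x, f x ^ (1 / (1 - b)) ∂σ ≤ 1 → ∫⁻ x, g x ^ (1 / (1 - a)) ∂u ≤ 1 →
        G.form u σ (fun j => V j ^ (-(a + b))) J f g ≤ C * (K * (rσ ^ (-a) + ru ^ (-b))) := by
  obtain ⟨C1, hC1, H1⟩ := exists_testing X ι ha hb hab hθ0 hθ1
  obtain ⟨C2, hC2, H2⟩ := exists_testing X ι hb ha (by linarith) hθ0 hθ1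
  obtain ⟨p, hpd⟩ : ∃ p, p = 1 / (1 - b) := ⟨_, rfl⟩
  obtain ⟨q', hqd'⟩ : ∃ q', q' = 1 / (1 - a) := ⟨_, rfl⟩
  obtain ⟨q, hqd⟩ : ∃ q, q = 1 / a := ⟨_, rfl⟩
  obtain ⟨p', hpd'⟩ : ∃ p', p' = 1 / b := ⟨_, rfl⟩
  have h1a : 0 < 1 - a := by linarith
  have h1b : 0 < 1 - b := by linarith
  have hp : 1 < p := by rw [hpd, lt_div_iff₀ h1b]; linarith
  have hq' : 1 < q' := by rw [hqd', lt_div_iff₀ h1a]; linarith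
  have hq : 1 < q := by rw [hqd, lt_div_iff₀ ha]; linarith
  have hp' : 1 < p' := by rw [hpd', lt_div_iff₀ hb]; linarith
  have hpq : p < q := by
    rw [hpd, hqd]; exact one_div_lt_one_div_of_lt ha (by linarith)
  have hqp : q' < p' := by
    rw [hqd', hpd']; exact one_div_lt_one_div_of_lt hb (by linarith)
  have hqq : q.HolderConjugate q' := by
    rw [Real.holderConjugate_iff]
    refine ⟨hq, ?_⟩
    rw [hqd, hqd']; simp
  have hpp : p'.HolderConjugate p := by
    rw [Real.holderConjugate_iff]
    refine ⟨hp', ?_⟩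
    rw [hpd, hpd']; simp
  have ia : 1 / q = a := by rw [hqd]; simp
  have ib : 1 / p' = b := by rw [hpd']; simp
  set Cp := geoC (p - 1) ^ p with hCp
  set Cq := geoC (q' - 1) ^ q' with hCq
  have tCp : Cp ≠ ∞ := ENNReal.rpow_ne_top_of_nonneg (by linarith) ofReal_ne_top
  have tCq : Cq ≠ ∞ := ENNReal.rpow_ne_top_of_nonneg (by linarith) ofReal_ne_top
  set D1 := 2 * ((C1 * Cp) ^ (1 / q) * (Cp + 1) ^ (1 / q')) with hD1
  set D2 := 2 * ((C2 * Cq) ^ (1 / p') * (Cq + 1) ^ (1 / p)) with hD2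
  have tD1 : D1 ≠ ∞ := by
    refine ENNReal.mul_ne_top (by simp) (ENNReal.mul_ne_top ?_ ?_)
    · exact ENNReal.rpow_ne_top_of_nonneg (by positivity) (ENNReal.mul_ne_top hC1 tCp)
    · exact ENNReal.rpow_ne_top_of_nonneg (by positivity) (ENNReal.add_ne_top.2 ⟨tCp, one_ne_top⟩)
  have tD2 : D2 ≠ ∞ := by
    refine ENNReal.mul_ne_top (by simp) (ENNReal.mul_ne_top ?_ ?_)
    · exact ENNReal.rpow_ne_top_of_nonneg (by positivity) (ENNReal.mul_ne_top hC2 tCq)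
    · exact ENNReal.rpow_ne_top_of_nonneg (by positivity) (ENNReal.add_ne_top.2 ⟨tCq, one_ne_top⟩)
  refine ⟨D1 + D2, ENNReal.add_ne_top.2 ⟨tD1, tD2⟩, ?_⟩
  intro G u σ V K ru rσ h ru0 rut rσ0 rσt J f g hf hg hf1 hg1
  rw [← hpd] at hf1
  rw [← hqd'] at hg1
  set T : ℕ → ℝ≥0∞ := fun j => V j ^ (-(a + b)) with hT
  obtain ⟨𝒜, h𝒜⟩ : ∃ 𝒜 : ℕ → X → Prop, 𝒜 = fun j x =>
    G.av u g j x ^ q' * G.ms u j x ≤ G.av σ f j x ^ p * G.ms σ j x := ⟨_, rfl⟩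
  have l𝒜 : ∀ j, G.Lev j (𝒜 j) := fun j x y hxy => by
    simp only [h𝒜, G.lev_av u g j x y hxy, G.lev_av σ f j x y hxy, G.lev_ms u j x y hxy,
      G.lev_ms σ j x y hxy]
  have ln𝒜 : ∀ j, G.Lev j (fun x => ¬ 𝒜 j x) := fun j x y hxy => by
    simp only [l𝒜 j x y hxy]
  classical
  have half1 := G.half h.u0 h.ut h.s0 h.st hf hg hp hpq hqq (T := T) (J := J) hf1 hg1 l𝒜
    (fun j x hx => by rw [h𝒜] at hx; exact hx) (Ct := rσ⁻¹ * (C1 * K ^ q)) (by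
      intro i x
      have := H1 G u σ V K ru rσ h J i x
      rw [← hqd] at this
      rw [mul_assoc, ← ENNReal.div_eq_inv_mul, ENNReal.le_div_iff_mul_le (Or.inl rσ0) (Or.inl rσt),
        mul_comm]
      refine this.trans_eq ?_
      congr 2
      rw [hpd]; field_simp)
  have half2 := G.half h.s0 h.st h.u0 h.ut hg hf hq' hqp hpp (T := T) (J := J) hg1 hf1 ln𝒜
    (fun j x hx => by rw [h𝒜] at hx; exact (not_le.1 hx).le) (Ct := ru⁻¹ * (C2 * K ^ p')) (by
      intro i x
      have := H2 G σ u V K rσ ru h.symm J i x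
      rw [← hpd', add_comm b a] at this
      rw [mul_assoc, ← ENNReal.div_eq_inv_mul, ENNReal.le_div_iff_mul_le (Or.inl ru0) (Or.inl rut),
        mul_comm]
      refine this.trans_eq ?_
      congr 2
      rw [hqd']; field_simp)
  have split : ∀ j, ∫⁻ x, T j * (∫⁻ y in G.Q j x, f y ∂σ) * g x ∂u ≤
      ∫⁻ x, (if 𝒜 j x then T j * G.ms σ j x * G.av σ f j x * g x else 0) ∂u +
      ∫⁻ x, (if ¬ 𝒜 j x then T j * G.ms u j x * G.av u g j x * f x else 0) ∂σ := by
    intro j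
    have m1 := G.measurable_cell σ f j
    have m2 := G.measurable_cell u g j
    have m3 := G.measurable_ms σ j
    have m4 := G.measurable_av σ f j
    have mi : Measurable
        (fun x => if 𝒜 j x then T j * G.ms σ j x * G.av σ f j x * g x else 0) :=
      Measurable.ite (l𝒜 j).measurableSet (by fun_prop) measurable_const
    have ψl : G.Lev j (fun x => if ¬ 𝒜 j x then T j else 0) := fun x y hxy => by
      simp only [l𝒜 j x y hxy]
    have key := G.comp (μ := u) (ν := σ) ψl (H := fun x => (∫⁻ y in G.Q j x, f y ∂σ) * g x)
      (K := fun x => (∫⁻ y in G.Q j x, g y ∂u) * f x) (by fun_prop) (by fun_prop) (by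
        intro x _
        have e : ∀ (μ ν : Measure X) (f g : X → ℝ≥0∞), Measurable g →
            ∫⁻ z in G.Q j x, (∫⁻ y in G.Q j z, f y ∂ν) * g z ∂μ =
            (∫⁻ y in G.Q j x, f y ∂ν) * ∫⁻ z in G.Q j x, g z ∂μ := by
          intro μ ν f g hg
          rw [← lintegral_const_mul _ hg]
          exact setLIntegral_congr_fun (G.measQ j x) fun y hy => by
            simp only [G.lev_cell ν f j y x hy]
        rw [e u σ f g hg, e σ u g f hf, mul_comm])
    have e1 : ∀ x, T j * (∫⁻ y in G.Q j x, f y ∂σ) * g x =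
        (if 𝒜 j x then T j * G.ms σ j x * G.av σ f j x * g x else 0) +
        (if ¬ 𝒜 j x then T j else 0) * ((∫⁻ y in G.Q j x, f y ∂σ) * g x) := by
      intro x
      by_cases hx : 𝒜 j x
      · simp only [hx, not_true, if_true, if_false, zero_mul, add_zero]
        rw [← G.ms_mul_av (h.s0 j x) (h.st j x)]; ring
      · simp only [hx, not_false_iff, if_true, if_false, zero_add]; ring
    simp only [e1]
    rw [lintegral_add_left mi]
    refine add_le_add le_rfl (key.trans_eq (lintegral_congr fun x => ?_))
    by_cases hx : 𝒜 j x
    · simp [hx]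
    · simp only [hx, not_false_iff, if_true]
      rw [← G.ms_mul_av (h.u0 j x) (h.ut j x)]; ring
  have simp1 : 2 * ((rσ⁻¹ * (C1 * K ^ q) * Cp) ^ (1 / q) * (Cp + 1) ^ (1 / q')) =
      D1 * (K * rσ ^ (-a)) := by
    have hq0 : 0 ≤ 1 / q := by positivity
    have e : rσ⁻¹ * (C1 * K ^ q) * Cp = (C1 * Cp) * (K ^ q * rσ⁻¹) := by ring
    rw [e, ENNReal.mul_rpow_of_nonneg _ _ hq0, ENNReal.mul_rpow_of_nonneg (K ^ q) _ hq0,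
      ← ENNReal.rpow_mul, mul_one_div_cancel (by linarith), ENNReal.rpow_one, ENNReal.rpow_neg,
      ENNReal.inv_rpow, hD1, ia]
    ring
  have simp2 : 2 * ((ru⁻¹ * (C2 * K ^ p') * Cq) ^ (1 / p') * (Cq + 1) ^ (1 / p)) =
      D2 * (K * ru ^ (-b)) := by
    have hq0 : 0 ≤ 1 / p' := by positivity
    have e : ru⁻¹ * (C2 * K ^ p') * Cq = (C2 * Cq) * (K ^ p' * ru⁻¹) := by ring
    rw [e, ENNReal.mul_rpow_of_nonneg _ _ hq0, ENNReal.mul_rpow_of_nonneg (K ^ p') _ hq0,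
      ← ENNReal.rpow_mul, mul_one_div_cancel (by linarith), ENNReal.rpow_one, ENNReal.rpow_neg,
      ENNReal.inv_rpow, hD2, ib]
    ring
  rw [simp1] at half1
  rw [simp2] at half2
  calc G.form u σ T J f g ≤ _ := Finset.sum_le_sum fun j _ => split j
    _ = _ := Finset.sum_add_distrib
    _ ≤ D1 * (K * rσ ^ (-a)) + D2 * (K * ru ^ (-b)) := by
        refine add_le_add half1 (le_of_eq_of_le ?_ half2)
        refine Finset.sum_congr rfl fun j _ => lintegral_congr fun x => ?_
        congr
    _ ≤ (D1 + D2) * (K * rσ ^ (-a)) + (D1 + D2) * (K * ru ^ (-b)) := by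
        gcongr
        · exact le_self_add
        · exact le_add_self
    _ = _ := by ring

/-- The bilinear estimate, with a constant depending on `a`, `b`, `θ` only. -/
lemma exists_form_le (X ι : Type*) [MeasurableSpace X] [Countable ι] {a b : ℝ} (ha : 0 < a)
    (hb : 0 < b) (hab : a + b < 1) {θ : ℝ≥0∞} (hθ0 : θ ≠ 0) (hθ1 : θ < 1) :
    ∃ C : ℝ≥0∞, C ≠ ∞ ∧ ∀ (G : Grid X ι) (u σ : Measure X) (V : ℕ → ℝ≥0∞) (K ru rσ : ℝ≥0∞),
      G.Pair u σ V θ a b K ru rσ → ru ≠ 0 → ru ≠ ∞ → rσ ≠ 0 → rσ ≠ ∞ →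
      ∀ (J : ℕ) (f g : X → ℝ≥0∞), Measurable f → Measurable g →
        ∫⁻ x, f x ^ (1 / (1 - b)) ∂σ ≠ ∞ → ∫⁻ x, g x ^ (1 / (1 - a)) ∂u ≠ ∞ →
        G.form u σ (fun j => V j ^ (-(a + b))) J f g ≤ C * (K * (rσ ^ (-a) + ru ^ (-b))) *
          ((∫⁻ x, f x ^ (1 / (1 - b)) ∂σ) ^ (1 - b) *
            (∫⁻ x, g x ^ (1 / (1 - a)) ∂u) ^ (1 - a)) := by
  obtain ⟨C, hC, H⟩ := exists_form_le_one X ι ha hb hab hθ0 hθ1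
  refine ⟨C, hC, ?_⟩
  intro G u σ V K ru rσ h ru0 rut rσ0 rσt J f g hf hg hft hgt
  have h1a : 0 < 1 - a := by linarith
  have h1b : 0 < 1 - b := by linarith
  set F := (∫⁻ x, f x ^ (1 / (1 - b)) ∂σ) ^ (1 - b) with hF
  set N := (∫⁻ x, g x ^ (1 / (1 - a)) ∂u) ^ (1 - a) with hN
  have Ft : F ≠ ∞ := ENNReal.rpow_ne_top_of_nonneg h1b.le hft
  have Nt : N ≠ ∞ := ENNReal.rpow_ne_top_of_nonneg h1a.le hgt
  have norm : ∀ (μ : Measure X) (e : ℝ) (φ : X → ℝ≥0∞), 0 < e → Measurable φ →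
      (∫⁻ x, φ x ^ (1 / e) ∂μ) ^ e ≠ 0 → (∫⁻ x, φ x ^ (1 / e) ∂μ) ^ e ≠ ∞ →
      ∫⁻ x, (((∫⁻ x, φ x ^ (1 / e) ∂μ) ^ e)⁻¹ * φ x) ^ (1 / e) ∂μ ≤ 1 := by
    intro μ e φ he hφ h0 ht
    have : ∀ x, (((∫⁻ x, φ x ^ (1 / e) ∂μ) ^ e)⁻¹ * φ x) ^ (1 / e) =
        (∫⁻ x, φ x ^ (1 / e) ∂μ)⁻¹ * φ x ^ (1 / e) := by
      intro x
      rw [ENNReal.mul_rpow_of_nonneg _ _ (by positivity), ENNReal.inv_rpow, ← ENNReal.rpow_mul,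
        mul_one_div_cancel he.ne', ENNReal.rpow_one]
    simp only [this]
    rw [lintegral_const_mul _ (hφ.pow_const _)]
    exact ENNReal.inv_mul_le_one _
  have zero : ∀ (μ : Measure X) (e : ℝ) (φ : X → ℝ≥0∞), 0 < e → Measurable φ →
      (∫⁻ x, φ x ^ (1 / e) ∂μ) ^ e = 0 → φ =ᵐ[μ] 0 := by
    intro μ e φ he hφ h0
    rw [ENNReal.rpow_eq_zero_iff_of_pos he, lintegral_eq_zero_iff (hφ.pow_const _)] at h0
    filter_upwards [h0] with x hx
    simpa [ENNReal.rpow_eq_zero_iff, he, he.le.not_gt] using hx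
  rcases eq_or_ne F 0 with F0 | F0
  · have := zero σ (1 - b) f h1b hf F0
    have e : ∀ j x, ∫⁻ y in G.Q j x, f y ∂σ = 0 := fun j x => by
      rw [lintegral_congr_ae (ae_restrict_of_ae this)]; simp
    simp [form, e]
  rcases eq_or_ne N 0 with N0 | N0
  · have := zero u (1 - a) g h1a hg N0
    have e : G.form u σ (fun j => V j ^ (-(a + b))) J f g = 0 := by
      rw [form]
      refine Finset.sum_eq_zero fun j _ => ?_
      rw [← lintegral_zero (μ := u)]
      refine lintegral_congr_ae ?_
      filter_upwards [this] with x hx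
      simp [hx]
    rw [e]; exact zero_le
  have key := H G u σ V K ru rσ h ru0 rut rσ0 rσt J (fun x => F⁻¹ * f x) (fun x => N⁻¹ * g x)
    (hf.const_mul _) (hg.const_mul _) (norm σ (1 - b) f h1b hf F0 Ft) (norm u (1 - a) g h1a hg N0 Nt)
  have scale : G.form u σ (fun j => V j ^ (-(a + b))) J f g = F * N *
      G.form u σ (fun j => V j ^ (-(a + b))) J (fun x => F⁻¹ * f x) (fun x => N⁻¹ * g x) := by
    rw [form, form, Finset.mul_sum]
    refine Finset.sum_congr rfl fun j _ => ?_
    have m1 := G.measurable_cell σ f j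
    simp only [lintegral_const_mul _ hf]
    rw [← lintegral_const_mul _ (by fun_prop)]
    refine lintegral_congr fun x => ?_
    calc _ = (F * F⁻¹) * (N * N⁻¹) * (V j ^ (-(a + b)) * (∫⁻ y in G.Q j x, f y ∂σ) * g x) := by
          rw [ENNReal.mul_inv_cancel F0 Ft, ENNReal.mul_inv_cancel N0 Nt, one_mul, one_mul]
      _ = _ := by ring
  rw [scale, mul_comm]
  gcongr

end Grid

/-! ### Shifted dyadic grids in `ℝⁿ` -/

lemma volume_box {n : ℕ} (s : Fin n → Set ℝ) (hs : ∀ i, MeasurableSet (s i)) :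
    volume {y : En n | ∀ i, y i ∈ s i} = ∏ i, volume (s i) := by
  have h := (PiLp.volume_preserving_ofLp (Fin n)).measure_preimage
    (MeasurableSet.univ_pi hs).nullMeasurableSet
  rw [volume_pi_pi] at h
  rw [← h]
  congr 1
  ext y
  simp

lemma floor_refine {x y : ℝ} (h : ⌊2 * x⌋ = ⌊2 * y⌋) : ⌊x⌋ = ⌊y⌋ := by
  have key : ∀ x y : ℝ, ⌊2 * x⌋ = ⌊2 * y⌋ → ⌊x⌋ ≤ ⌊y⌋ := by
    intro x y h
    rw [Int.le_floor]
    have h1 : 2 * ⌊x⌋ ≤ ⌊2 * x⌋ := by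
      rw [Int.le_floor]; push_cast; linarith [Int.floor_le x]
    rw [h, Int.le_floor] at h1
    push_cast at h1
    linarith
  exact le_antisymm (key x y h) (key y x h.symm)

/-- The one-third trick: two points at distance less than a third of the side length lie in the
same interval of the standard grid or of the grid shifted by `2 ^ j / 3`. -/
lemma floor_third {x y : ℝ} (j : ℕ) (h : |x - y| < 1 / 3) :
    ⌊x⌋ = ⌊y⌋ ∨ ⌊x - 2 ^ j / 3⌋ = ⌊y - 2 ^ j / 3⌋ := by
  have key : ∀ x y : ℝ, ⌊x⌋ < ⌊y⌋ → x < ⌊y⌋ ∧ (⌊y⌋ : ℝ) ≤ y := fun x y h =>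
    ⟨Int.floor_lt.1 h, Int.floor_le y⟩
  have between : ∀ x y : ℝ, ⌊x⌋ ≠ ⌊y⌋ → ∃ m : ℤ, (x < m ∧ m ≤ y) ∨ (y < m ∧ m ≤ x) := by
    intro x y h
    rcases lt_or_gt_of_ne h with h | h
    · exact ⟨_, Or.inl (key x y h)⟩
    · exact ⟨_, Or.inr (key y x h)⟩
  by_contra! hc
  obtain ⟨m, hm⟩ := between _ _ hc.1
  obtain ⟨l, hl⟩ := between _ _ hc.2
  rw [abs_lt] at h
  have h1 : ((3 * (m - l) : ℤ) : ℝ) < ((2 ^ j + 1 : ℤ) : ℝ) := by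
    push_cast
    rcases hm with hm | hm <;> rcases hl with hl | hl <;> linarith [hm.1, hm.2, hl.1, hl.2]
  have h2 : ((2 ^ j - 1 : ℤ) : ℝ) < ((3 * (m - l) : ℤ) : ℝ) := by
    push_cast
    rcases hm with hm | hm <;> rcases hl with hl | hl <;> linarith [hm.1, hm.2, hl.1, hl.2]
  have h3 := Int.cast_lt.1 h1
  have h4 := Int.cast_lt.1 h2
  have h5 : (3 : ℤ) ∣ 2 ^ j := ⟨m - l, by omega⟩
  have h6 : (3 : ℤ) ∣ 2 := Int.prime_three.dvd_of_dvd_pow h5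
  omega

/-- The dyadic grid with cells of side `h / 2 ^ j` in generation `j`, shifted by `τ`. -/
def dyadic (n : ℕ) (h : ℝ) (τ : Fin n → ℝ) : Grid (En n) (Fin n → ℤ) where
  κ j x i := ⌊2 ^ j * ((x i - τ i) / h)⌋
  meas j m := by
    have : (fun (x : En n) (i : Fin n) => ⌊2 ^ j * ((x i - τ i) / h)⌋) ⁻¹' {m} =
        ⋂ i, (fun x : En n => ⌊2 ^ j * ((x i - τ i) / h)⌋) ⁻¹' {m i} := by
      ext x; simp [funext_iff]
    rw [this]
    refine MeasurableSet.iInter fun i => ?_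
    have : Measurable (fun x : En n => ⌊2 ^ j * ((x i - τ i) / h)⌋) := by
      apply Measurable.floor
      fun_prop
    exact this (measurableSet_singleton _)
  refine j x y hxy := by
    ext i
    have := congrFun hxy i
    simp only [pow_succ'] at this
    rw [mul_assoc, mul_assoc] at this
    exact floor_refine this

/-- The lower corner of the cell of generation `j` containing `x`. -/
def corner (n : ℕ) (h : ℝ) (τ : Fin n → ℝ) (j : ℕ) (x : En n) : En n :=
  WithLp.toLp 2 fun i => τ i + ⌊2 ^ j * ((x i - τ i) / h)⌋ * (h / 2 ^ j)

lemma dyadic_Q {n : ℕ} {h : ℝ} (hh : 0 < h) (τ : Fin n → ℝ) (j : ℕ) (x : En n) :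
    (dyadic n h τ).Q j x = {y : En n | ∀ i, y i ∈ Ico (corner n h τ j x i)
      (corner n h τ j x i + h / 2 ^ j)} := by
  have h2 : (0 : ℝ) < 2 ^ j := by positivity
  ext y
  simp only [Grid.Q, dyadic, mem_ofPred_eq, funext_iff, mem_Ico, corner]
  refine forall_congr' fun i => ?_
  rw [Int.floor_eq_iff]
  set m := ((⌊2 ^ j * ((x i - τ i) / h)⌋ : ℤ) : ℝ)
  have e : 2 ^ j * ((y i - τ i) / h) = (y i - τ i) / (h / 2 ^ j) := by field_simp
  rw [e, le_div_iff₀ (by positivity), div_lt_iff₀ (by positivity), add_mul, one_mul]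
  constructor <;> rintro ⟨h1, h2⟩ <;> constructor <;> linarith

lemma volume_dyadic {n : ℕ} {h : ℝ} (hh : 0 < h) (τ : Fin n → ℝ) (j : ℕ) (x : En n) :
    volume ((dyadic n h τ).Q j x) = ENNReal.ofReal ((h / 2 ^ j) ^ n) := by
  rw [dyadic_Q hh, volume_box _ fun i => measurableSet_Ico]
  simp only [Real.volume_Ico, add_sub_cancel_left, Finset.prod_const, Finset.card_univ,
    Fintype.card_fin]
  rw [ENNReal.ofReal_pow (by positivity)]

lemma volume_cube {n : ℕ} (c : En n) {h : ℝ} (hh : 0 < h) :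
    volume (cube c h) = ENNReal.ofReal (h ^ n) := by
  have : cube c h = {y : En n | ∀ i, y i ∈ Icc (c i) (c i + h)} := rfl
  rw [this, volume_box _ fun i => measurableSet_Icc]
  simp only [Real.volume_Icc, add_sub_cancel_left, Finset.prod_const, Finset.card_univ,
    Fintype.card_fin]
  rw [ENNReal.ofReal_pow hh.le]

lemma dyadic_subset_cube {n : ℕ} {h : ℝ} (hh : 0 < h) (τ : Fin n → ℝ) (j : ℕ) (x : En n) :
    (dyadic n h τ).Q j x ⊆ cube (corner n h τ j x) (h / 2 ^ j) := by
  rw [dyadic_Q hh]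
  exact fun y hy i => ⟨(hy i).1, (hy i).2.le⟩

lemma exists_scale {d h : ℝ} (J : ℕ) (h1 : h / 2 ^ J / 6 ≤ d) (h2 : d < h / 3) :
    ∃ j ≤ J, h / 2 ^ j / 6 ≤ d ∧ d < h / 2 ^ j / 3 := by
  induction J with
  | zero => exact ⟨0, le_rfl, h1, by simpa using h2⟩
  | succ J ih =>
    by_cases hc : h / 2 ^ J / 6 ≤ d
    · obtain ⟨j, hj, hh⟩ := ih hc
      exact ⟨j, by omega, hh⟩
    · refine ⟨J + 1, le_rfl, h1, ?_⟩
      push Not at hc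
      refine hc.trans_eq ?_
      rw [pow_succ]; field_simp; ring

/-- The shift of the grid selected by `e`: each coordinate is shifted by `0` or `h / 3`. -/
def shift (n : ℕ) (h : ℝ) (e : Fin n → Bool) : Fin n → ℝ := fun i => if e i then h / 3 else 0

lemma exists_shift {n : ℕ} {h : ℝ} (hh : 0 < h) (j : ℕ) {x y : En n}
    (hxy : ‖x - y‖ < h / 2 ^ j / 3) :
    ∃ e : Fin n → Bool, y ∈ (dyadic n h (shift n h e)).Q j x := by
  have h2 : (0 : ℝ) < 2 ^ j := by positivity
  have key : ∀ i, ∃ e : Bool, ⌊2 ^ j * ((y i - (if e then h / 3 else 0)) / h)⌋ =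
      ⌊2 ^ j * ((x i - (if e then h / 3 else 0)) / h)⌋ := by
    intro i
    have h1 : |y i - x i| < h / 2 ^ j / 3 := by
      refine lt_of_le_of_lt ?_ hxy
      have := PiLp.norm_apply_le (x - y) i
      rw [Real.norm_eq_abs, PiLp.sub_apply] at this
      rwa [abs_sub_comm]
    have h3 : |2 ^ j * (y i / h) - 2 ^ j * (x i / h)| < 1 / 3 := by
      have e : 2 ^ j * (y i / h) - 2 ^ j * (x i / h) = (2 ^ j / h) * (y i - x i) := by
        field_simp
      rw [e, abs_mul, abs_of_pos (by positivity)]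
      calc (2 ^ j / h) * |y i - x i| < (2 ^ j / h) * (h / 2 ^ j / 3) := by gcongr
        _ = 1 / 3 := by field_simp
    have e2 : ∀ z : ℝ, 2 ^ j * (z / h) - 2 ^ j / 3 = 2 ^ j * ((z - h / 3) / h) := by
      intro z; field_simp
    rcases floor_third j h3 with hf | hf
    · exact ⟨false, by simpa using hf⟩
    · rw [e2, e2] at hf
      exact ⟨true, by simpa using hf⟩
  choose e he using key
  exact ⟨e, funext he⟩

/-! ### From cubes to dyadic grids -/

/-- The two-weight form of the `A_{p,q}` condition on `ℝⁿ`, with `a = 1 / q`, `b = 1 / p'`. The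
field `upper` is the `A_{p,q}` bound on cubes; `lower` is the Hölder inequality that holds when
`u` and `σ` are the powers `w ^ q` and `w ^ (-p')` of the same weight. -/
structure APair {n : ℕ} (u σ : Measure (En n)) (a b : ℝ) (K : ℝ≥0∞) : Prop where
  K0 : K ≠ 0
  Kt : K ≠ ∞
  ut : ∀ c h, 0 < h → u (cube c h) ≠ ∞
  st : ∀ c h, 0 < h → σ (cube c h) ≠ ∞
  upper : ∀ c h, 0 < h → u (cube c h) ^ a * σ (cube c h) ^ b ≤ K * volume (cube c h) ^ (a + b)
  lower : ∀ E, MeasurableSet E → volume E ^ (a + b) ≤ u E ^ a * σ E ^ b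

lemma APair.symm {n : ℕ} {u σ : Measure (En n)} {a b : ℝ} {K : ℝ≥0∞} (H : APair u σ a b K) :
    APair σ u b a K where
  K0 := H.K0
  Kt := H.Kt
  ut := H.st
  st := H.ut
  upper c h hh := by rw [mul_comm, add_comm]; exact H.upper c h hh
  lower E hE := by rw [mul_comm, add_comm]; exact H.lower E hE

lemma APair.pos {n : ℕ} {u σ : Measure (En n)} {a b : ℝ} {K : ℝ≥0∞} (H : APair u σ a b K)
    (ha : 0 < a) (hb : 0 < b) {E : Set (En n)} (hE : MeasurableSet E) (h0 : volume E ≠ 0) :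
    σ E ≠ 0 := by
  intro h
  have := H.lower E hE
  rw [h, ENNReal.zero_rpow_of_pos hb, mul_zero, nonpos_iff_eq_zero,
    ENNReal.rpow_eq_zero_iff_of_pos (by linarith)] at this
  exact h0 this

/-- The quantitative `A_∞` property: a subset filling half of a cell carries a fixed proportion of
its mass. -/
lemma APair.mass {n : ℕ} {u σ : Measure (En n)} {a b : ℝ} {K : ℝ≥0∞} (H : APair u σ a b K)
    (ha : 0 < a) (hb : 0 < b) {Q E : Set (En n)} (hE : MeasurableSet E)
    (hEQ : E ⊆ Q) (hut : u Q ≠ ∞) (hst : σ Q ≠ ∞) (hV0 : volume Q ≠ 0)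
    (hQ : u Q ^ a * σ Q ^ b ≤ K * volume Q ^ (a + b)) (hV : volume Q ≤ 2 * volume E) :
    (2 ^ (a + b) * K) ^ (-(1 / b)) * σ Q ≤ σ E := by
  have E0 : volume E ≠ 0 := by
    intro h; rw [h, mul_zero, nonpos_iff_eq_zero] at hV; exact hV0 hV
  have sE : σ E ≠ ∞ := ne_top_of_le_ne_top hst (measure_mono hEQ)
  have s0 := H.pos ha hb hE E0
  have u0 := H.symm.pos hb ha hE E0
  have u0' : u Q ≠ 0 := fun h => u0 (measure_mono_null hEQ h)
  have s0' : σ Q ≠ 0 := fun h => s0 (measure_mono_null hEQ h)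
  have key : u Q ^ a * σ Q ^ b ≤ (2 ^ (a + b) * K) * (u Q ^ a * σ E ^ b) := by
    calc u Q ^ a * σ Q ^ b ≤ K * (2 * volume E) ^ (a + b) := hQ.trans (by gcongr)
      _ = (2 ^ (a + b) * K) * volume E ^ (a + b) := by
          rw [ENNReal.mul_rpow_of_nonneg _ _ (by linarith)]; ring
      _ ≤ (2 ^ (a + b) * K) * (u E ^ a * σ E ^ b) := by gcongr; exact H.lower E hE
      _ ≤ _ := by gcongr
  obtain ⟨s, hs⟩ := exists_ex s0 sE
  obtain ⟨S, hS⟩ := exists_ex s0' hst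
  obtain ⟨U, hU⟩ := exists_ex u0' hut
  obtain ⟨k, hk⟩ := exists_ex H.K0 H.Kt
  obtain ⟨l, hl⟩ := exists_ex (x := 2) (by norm_num) (by norm_num)
  rw [hs, hS, hU, hk, hl] at key
  rw [hs, hS, hk, hl]
  simp only [ex_rpow, ← ex_add, ex_le] at key ⊢
  have : (l * (a + b) + k) * -(1 / b) + S = (S * b - (l * (a + b) + k)) / b := by
    field_simp; ring
  rw [this, div_le_iff₀ hb]
  linarith

lemma dyadic_child {n : ℕ} (hn : 2 ≤ n) {h : ℝ} (hh : 0 < h) (τ : Fin n → ℝ) (j : ℕ) (x : En n) :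
    volume ((dyadic n h τ).Q j x) ≤
      2 * volume ((dyadic n h τ).Q j x \ (dyadic n h τ).Q (j + 1) x) := by
  have hsub := (dyadic n h τ).Q_anti (Nat.le_succ j) x
  have hf : volume ((dyadic n h τ).Q (j + 1) x) ≠ ∞ := by
    rw [volume_dyadic hh]; exact ofReal_ne_top
  rw [measure_sdiff hsub ((dyadic n h τ).measQ _ _).nullMeasurableSet hf, volume_dyadic hh,
    volume_dyadic hh, ← ENNReal.ofReal_sub _ (by positivity)]
  have : (2 : ℝ≥0∞) = ENNReal.ofReal 2 := by simp
  rw [this, ← ENNReal.ofReal_mul (by norm_num)]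
  apply ENNReal.ofReal_le_ofReal
  have h1 : h / 2 ^ (j + 1) = (1 / 2) * (h / 2 ^ j) := by rw [pow_succ]; field_simp
  rw [h1, mul_pow]
  have h2 : ((1 : ℝ) / 2) ^ n ≤ (1 / 2) ^ 1 :=
    pow_le_pow_of_le_one (by norm_num) (by norm_num) (by omega)
  have h3 : 0 < (h / 2 ^ j) ^ n := by positivity
  nlinarith

lemma APair.decay {n : ℕ} (hn : 2 ≤ n) {u σ : Measure (En n)} {a b : ℝ} {K : ℝ≥0∞}
    (H : APair u σ a b K) (ha : 0 < a) (hb : 0 < b) {h : ℝ} (hh : 0 < h) (τ : Fin n → ℝ) (j : ℕ)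
    (x : En n) (hut : u ((dyadic n h τ).Q j x) ≠ ∞) (hst : σ ((dyadic n h τ).Q j x) ≠ ∞)
    (hQ : u ((dyadic n h τ).Q j x) ^ a * σ ((dyadic n h τ).Q j x) ^ b ≤
      K * volume ((dyadic n h τ).Q j x) ^ (a + b)) :
    σ ((dyadic n h τ).Q (j + 1) x) + (2 ^ (a + b) * K) ^ (-(1 / b)) * σ ((dyadic n h τ).Q j x) ≤
      σ ((dyadic n h τ).Q j x) := by
  have hsub := (dyadic n h τ).Q_anti (Nat.le_succ j) x
  have m1 := (dyadic n h τ).measQ j x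
  have m2 := (dyadic n h τ).measQ (j + 1) x
  have := H.mass ha hb (m1.diff m2) sdiff_subset hut hst
    (by rw [volume_dyadic hh]; simp; positivity)
    hQ (dyadic_child hn hh τ j x)
  calc _ ≤ σ ((dyadic n h τ).Q (j + 1) x) +
        σ ((dyadic n h τ).Q j x \ (dyadic n h τ).Q (j + 1) x) := by gcongr
    _ = _ := by
      rw [add_comm]
      have := measure_sdiff_add_inter (μ := σ) ((dyadic n h τ).Q j x) m2
      rwa [inter_eq_self_of_subset_right hsub] at this

lemma APair.pair {n : ℕ} (hn : 2 ≤ n) {u σ : Measure (En n)} {a b : ℝ} {K : ℝ≥0∞}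
    (H : APair u σ a b K) (ha : 0 < a) (hb : 0 < b) {h : ℝ} (hh : 0 < h) (τ : Fin n → ℝ) :
    (dyadic n h τ).Pair u σ (fun j => ENNReal.ofReal ((h / 2 ^ j) ^ n))
      (ENNReal.ofReal ((1 / 2) ^ n)) a b K ((2 ^ (a + b) * K) ^ (-(1 / a)))
      ((2 ^ (a + b) * K) ^ (-(1 / b))) := by
  have hpos : ∀ j : ℕ, 0 < h / 2 ^ j := fun j => by positivity
  have ut : ∀ j x, u ((dyadic n h τ).Q j x) ≠ ∞ := fun j x =>
    ne_top_of_le_ne_top (H.ut _ _ (hpos j)) (measure_mono (dyadic_subset_cube hh τ j x))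
  have st : ∀ j x, σ ((dyadic n h τ).Q j x) ≠ ∞ := fun j x =>
    ne_top_of_le_ne_top (H.st _ _ (hpos j)) (measure_mono (dyadic_subset_cube hh τ j x))
  have H1 : ∀ j x, u ((dyadic n h τ).Q j x) ^ a * σ ((dyadic n h τ).Q j x) ^ b ≤
      K * volume ((dyadic n h τ).Q j x) ^ (a + b) := by
    intro j x
    have := H.upper (corner n h τ j x) _ (hpos j)
    rw [volume_cube _ (hpos j), ← volume_dyadic hh τ j x] at this
    refine le_trans ?_ this
    gcongr <;> exact dyadic_subset_cube hh τ j x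
  have V0 : ∀ j x, volume ((dyadic n h τ).Q j x) ≠ 0 := by
    intro j x
    rw [volume_dyadic hh]
    simp; positivity
  exact
  { u0 := fun j x => H.symm.pos hb ha ((dyadic n h τ).measQ j x) (V0 j x)
    ut := ut
    s0 := fun j x => H.pos ha hb ((dyadic n h τ).measQ j x) (V0 j x)
    st := st
    V0 := fun j => by simp; positivity
    Vt := fun j => ofReal_ne_top
    K0 := H.K0
    Kt := H.Kt
    Vθ := fun j k => by
      rw [← ENNReal.ofReal_pow (by positivity), ← ENNReal.ofReal_mul (by positivity)]
      congr 1
      rw [← pow_mul, mul_comm n k, pow_mul, ← mul_pow, pow_add]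
      congr 1
      field_simp
      rw [← mul_pow]; norm_num
    H1 := fun j x => by
      have := H1 j x
      rw [volume_dyadic hh] at this
      exact this
    Hu := fun j x => by
      have := H.symm.decay hn hb ha hh τ j x (st j x) (ut j x) (by
        rw [mul_comm, add_comm]; exact H1 j x)
      rw [add_comm b a] at this
      exact this
    Hσ := fun j x => H.decay hn ha hb hh τ j x (ut j x) (st j x) (H1 j x) }

/-! ### The Riesz kernel -/

/-- The kernel `|x - y| ^ (-(n - 1))`; it vanishes on the diagonal when `n ≥ 2`. -/
def rker (n : ℕ) (x y : En n) : ℝ≥0∞ := ENNReal.ofReal (‖x - y‖ ^ (-((n : ℝ) - 1)))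

open Classical in
/-- The Riesz kernel restricted to the distances between `2 ^ (-M) / 6` and `2 ^ M / 3`. -/
def kerT (n M : ℕ) (x y : En n) : ℝ≥0∞ :=
  if (2 : ℝ) ^ M / 2 ^ (2 * M) / 6 ≤ ‖x - y‖ ∧ ‖x - y‖ < 2 ^ M / 3 then rker n x y else 0

lemma measurable_rker (n : ℕ) : Measurable (fun z : En n × En n => rker n z.1 z.2) := by
  unfold rker; fun_prop

lemma measurable_kerT (n M : ℕ) : Measurable (fun z : En n × En n => kerT n M z.1 z.2) := by
  unfold kerT
  refine Measurable.ite ?_ (measurable_rker n) measurable_const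
  have m : Measurable fun z : En n × En n => ‖z.1 - z.2‖ := by fun_prop
  exact (measurableSet_le measurable_const m).inter (measurableSet_lt m measurable_const)

lemma kerT_mono (n : ℕ) (x y : En n) : Monotone fun M => kerT n M x y := by
  intro M N hMN
  have e : ∀ M : ℕ, (2 : ℝ) ^ M / 2 ^ (2 * M) = 1 / 2 ^ M := by
    intro M; rw [two_mul, pow_add]; field_simp
  have h1 : (2 : ℝ) ^ M ≤ 2 ^ N := pow_le_pow_right₀ (by norm_num) hMN
  have h2 : (1 : ℝ) / 2 ^ N ≤ 1 / 2 ^ M := by gcongr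
  simp only [kerT, e]
  split_ifs with ha hb
  · exact le_rfl
  · exact absurd ⟨by linarith [ha.1], by linarith [ha.2]⟩ hb
  · exact zero_le
  · exact le_rfl

lemma iSup_kerT {n : ℕ} (hn : 2 ≤ n) (x y : En n) : ⨆ M, kerT n M x y = rker n x y := by
  have e : ∀ M : ℕ, (2 : ℝ) ^ M / 2 ^ (2 * M) = 1 / 2 ^ M := by
    intro M; rw [two_mul, pow_add]; field_simp
  apply le_antisymm
  · refine iSup_le fun M => ?_
    unfold kerT; split_ifs; exacts [le_rfl, zero_le]
  · rcases eq_or_ne x y with h | h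
    · have hn' : (2 : ℝ) ≤ n := by exact_mod_cast hn
      rw [rker, h, sub_self, norm_zero, Real.zero_rpow (by linarith)]
      simp
    · have hd : 0 < ‖x - y‖ := norm_pos_iff.2 (sub_ne_zero.2 h)
      obtain ⟨M1, h1⟩ := pow_unbounded_of_one_lt (3 * ‖x - y‖) (one_lt_two)
      obtain ⟨M2, h2⟩ := pow_unbounded_of_one_lt (1 / (6 * ‖x - y‖)) (one_lt_two)
      have h3 : (2 : ℝ) ^ M1 ≤ 2 ^ (M1 + M2) := pow_le_pow_right₀ (by norm_num) (by omega)
      have h4 : (2 : ℝ) ^ M2 ≤ 2 ^ (M1 + M2) := pow_le_pow_right₀ (by norm_num) (by omega)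
      refine le_iSup_of_le (M1 + M2) ?_
      unfold kerT
      rw [if_pos]
      refine ⟨?_, by linarith⟩
      rw [e, div_div, div_le_iff₀ (by positivity)]
      rw [div_lt_iff₀ (by positivity)] at h2
      nlinarith

lemma kerT_le {n : ℕ} (hn : 2 ≤ n) (M : ℕ) (x y : En n) {β : ℝ} (hβ : β = ((n : ℝ) - 1) / n) :
    kerT n M x y ≤ ENNReal.ofReal (6 ^ ((n : ℝ) - 1)) * ∑ e : Fin n → Bool,
      ∑ j ∈ Finset.range (2 * M + 1), ENNReal.ofReal (((2 : ℝ) ^ M / 2 ^ j) ^ n) ^ (-β) *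
        ((dyadic n (2 ^ M) (shift n (2 ^ M) e)).Q j x).indicator 1 y := by
  have hn' : (2 : ℝ) ≤ n := by exact_mod_cast hn
  unfold kerT
  split_ifs with hd
  swap
  · exact zero_le
  obtain ⟨j, hj, h1, h2⟩ := exists_scale (2 * M) hd.1 hd.2
  obtain ⟨e, he⟩ := exists_shift (by positivity) j h2
  have hs : (0 : ℝ) < 2 ^ M / 2 ^ j := by positivity
  have key : rker n x y ≤ ENNReal.ofReal (6 ^ ((n : ℝ) - 1)) *
      (ENNReal.ofReal (((2 : ℝ) ^ M / 2 ^ j) ^ n) ^ (-β) *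
        ((dyadic n (2 ^ M) (shift n (2 ^ M) e)).Q j x).indicator 1 y) := by
    rw [indicator_of_mem he, Pi.one_apply, mul_one, ENNReal.ofReal_rpow_of_pos (by positivity),
      ← ENNReal.ofReal_mul (by positivity), rker]
    apply ENNReal.ofReal_le_ofReal
    rw [← Real.rpow_natCast, ← Real.rpow_mul hs.le]
    have : (n : ℝ) * -β = -((n : ℝ) - 1) := by rw [hβ]; field_simp
    rw [this]
    calc ‖x - y‖ ^ (-((n : ℝ) - 1)) ≤ ((2 : ℝ) ^ M / 2 ^ j / 6) ^ (-((n : ℝ) - 1)) :=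
          Real.rpow_le_rpow_of_nonpos (by positivity) h1 (by linarith)
      _ = _ := by
        rw [Real.div_rpow hs.le (by norm_num), Real.rpow_neg (by norm_num : (0 : ℝ) ≤ 6)]
        field_simp
  refine key.trans ?_
  gcongr
  refine le_trans ?_ (Finset.single_le_sum (f := fun e => ∑ j ∈ Finset.range (2 * M + 1),
    ENNReal.ofReal (((2 : ℝ) ^ M / 2 ^ j) ^ n) ^ (-β) *
        ((dyadic n (2 ^ M) (shift n (2 ^ M) e)).Q j x).indicator 1 y) (fun _ _ => zero_le)
        (Finset.mem_univ e))
  exact Finset.single_le_sum (f := fun j => ENNReal.ofReal (((2 : ℝ) ^ M / 2 ^ j) ^ n) ^ (-β) *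
        ((dyadic n (2 ^ M) (shift n (2 ^ M) e)).Q j x).indicator 1 y) (fun _ _ => zero_le)
        (Finset.mem_range.2 (by omega))

/-- The truncated bilinear form is dominated by finitely many dyadic forms. -/
lemma kerT_form_le {n : ℕ} (hn : 2 ≤ n) (M : ℕ) (u σ : Measure (En n)) {β : ℝ}
    (hβ : β = ((n : ℝ) - 1) / n) {φ g : En n → ℝ≥0∞} (hφ : Measurable φ) (hg : Measurable g) :
    ∫⁻ x, (∫⁻ y, kerT n M x y * φ y ∂σ) * g x ∂u ≤ ENNReal.ofReal (6 ^ ((n : ℝ) - 1)) *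
      ∑ e : Fin n → Bool, (dyadic n (2 ^ M) (shift n (2 ^ M) e)).form u σ
        (fun j => ENNReal.ofReal (((2 : ℝ) ^ M / 2 ^ j) ^ n) ^ (-β)) (2 * M + 1) φ g := by
  have inner : ∀ x, ∫⁻ y, kerT n M x y * φ y ∂σ ≤ ENNReal.ofReal (6 ^ ((n : ℝ) - 1)) *
      ∑ e : Fin n → Bool, ∑ j ∈ Finset.range (2 * M + 1),
        ENNReal.ofReal (((2 : ℝ) ^ M / 2 ^ j) ^ n) ^ (-β) *
        ∫⁻ y in (dyadic n (2 ^ M) (shift n (2 ^ M) e)).Q j x, φ y ∂σ := by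
    intro x
    have mi : ∀ (e : Fin n → Bool) (j : ℕ), Measurable
        (((dyadic n (2 ^ M) (shift n (2 ^ M) e)).Q j x).indicator φ) := fun e j =>
      hφ.indicator ((dyadic n (2 ^ M) (shift n (2 ^ M) e)).measQ j x)
    calc ∫⁻ y, kerT n M x y * φ y ∂σ
        ≤ ∫⁻ y, ENNReal.ofReal (6 ^ ((n : ℝ) - 1)) * ∑ e : Fin n → Bool,
          ∑ j ∈ Finset.range (2 * M + 1), ENNReal.ofReal (((2 : ℝ) ^ M / 2 ^ j) ^ n) ^ (-β) *
          ((dyadic n (2 ^ M) (shift n (2 ^ M) e)).Q j x).indicator φ y ∂σ := by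
          refine lintegral_mono fun y => ?_
          refine (mul_le_mul_left (kerT_le hn M x y hβ) (φ y)).trans_eq ?_
          rw [mul_assoc, Finset.sum_mul]
          congr 1
          refine Finset.sum_congr rfl fun e _ => ?_
          rw [Finset.sum_mul]
          refine Finset.sum_congr rfl fun j _ => ?_
          rw [mul_assoc]
          congr 1
          by_cases hy : y ∈ (dyadic n (2 ^ M) (shift n (2 ^ M) e)).Q j x <;> simp [hy]
      _ = _ := by
          rw [lintegral_const_mul _ (by fun_prop), lintegral_finsetSum _ (by fun_prop)]
          congr 1
          refine Finset.sum_congr rfl fun e _ => ?_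
          rw [lintegral_finsetSum _ (by fun_prop)]
          refine Finset.sum_congr rfl fun j _ => ?_
          rw [lintegral_const_mul _ (by fun_prop),
            lintegral_indicator ((dyadic n (2 ^ M) (shift n (2 ^ M) e)).measQ j x)]
  have mc : ∀ (e : Fin n → Bool) (j : ℕ), Measurable fun x =>
      ∫⁻ y in (dyadic n (2 ^ M) (shift n (2 ^ M) e)).Q j x, φ y ∂σ := fun e j =>
    (dyadic n (2 ^ M) (shift n (2 ^ M) e)).measurable_cell σ φ j
  refine (lintegral_mono fun x => mul_le_mul_left (inner x) (g x)).trans_eq ?_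
  simp only [mul_assoc, Finset.sum_mul, Grid.form]
  rw [lintegral_const_mul _ (by fun_prop), lintegral_finsetSum _ (by fun_prop)]
  congr 1
  refine Finset.sum_congr rfl fun e _ => ?_
  rw [lintegral_finsetSum _ (by fun_prop)]

/-- The bilinear estimate for the Riesz kernel with respect to an `APair`. -/
theorem exists_ker_form_le {n : ℕ} (hn : 2 ≤ n) {a b : ℝ} (ha : 0 < a) (hb : 0 < b)
    (hab : a + b = ((n : ℝ) - 1) / n) :
    ∃ C : ℝ≥0∞, C ≠ ∞ ∧ ∀ (u σ : Measure (En n)) [SFinite σ] (K : ℝ≥0∞), APair u σ a b K →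
      ∀ φ g : En n → ℝ≥0∞, Measurable φ → Measurable g →
        ∫⁻ x, φ x ^ (1 / (1 - b)) ∂σ ≠ ∞ → ∫⁻ x, g x ^ (1 / (1 - a)) ∂u ≠ ∞ →
        ∫⁻ x, (∫⁻ y, rker n x y * φ y ∂σ) * g x ∂u ≤
          C * (K * (K ^ (a / b) + K ^ (b / a))) *
          ((∫⁻ x, φ x ^ (1 / (1 - b)) ∂σ) ^ (1 - b) *
            (∫⁻ x, g x ^ (1 / (1 - a)) ∂u) ^ (1 - a)) := by
  have hn' : (2 : ℝ) ≤ n := by exact_mod_cast hn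
  have hab1 : a + b < 1 := by rw [hab, div_lt_one (by linarith)]; linarith
  obtain ⟨C, hC, H⟩ := Grid.exists_form_le (En n) (Fin n → ℤ) ha hb hab1
    (θ := ENNReal.ofReal ((1 / 2) ^ n)) (by simp)
    (by
      rw [← ENNReal.ofReal_one]
      exact (ENNReal.ofReal_lt_ofReal_iff (by norm_num)).2
        (pow_lt_one₀ (by norm_num) (by norm_num) (by omega)))
  -- the factor absorbs the `2 ^ n` shifted grids and the powers of `2` from the mass decay
  refine ⟨ENNReal.ofReal (6 ^ ((n : ℝ) - 1)) * (2 ^ n * (C *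
    ((2 ^ (a + b)) ^ (a / b) + (2 ^ (a + b)) ^ (b / a)))), ?_, ?_⟩
  · have h2 : ((2 : ℝ≥0∞) ^ (a + b)) ≠ ∞ := ENNReal.rpow_ne_top_of_nonneg (by linarith) (by norm_num)
    refine ENNReal.mul_ne_top ofReal_ne_top (ENNReal.mul_ne_top (by simp) (ENNReal.mul_ne_top hC
      (ENNReal.add_ne_top.2 ⟨ENNReal.rpow_ne_top_of_nonneg (by positivity) h2,
        ENNReal.rpow_ne_top_of_nonneg (by positivity) h2⟩)))
  intro u σ _ K hK φ g hφ hg hφt hgt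
  obtain ⟨N, hN⟩ : ∃ N, N = ((∫⁻ x, φ x ^ (1 / (1 - b)) ∂σ) ^ (1 - b) *
            (∫⁻ x, g x ^ (1 / (1 - a)) ∂u) ^ (1 - a)) := ⟨_, rfl⟩
  rw [← hN]
  obtain ⟨L, hL⟩ : ∃ L : ℝ≥0∞, L = 2 ^ (a + b) := ⟨_, rfl⟩
  have L0 : L ≠ 0 := by rw [hL]; exact (ENNReal.rpow_pos (by norm_num) (by norm_num)).ne'
  have Lt : L ≠ ∞ := by rw [hL]; exact ENNReal.rpow_ne_top_of_nonneg (by linarith) (by norm_num)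
  have LK0 : L * K ≠ 0 := mul_ne_zero L0 hK.K0
  have LKt : L * K ≠ ∞ := ENNReal.mul_ne_top Lt hK.Kt
  have trunc : ∀ M, ∫⁻ x, (∫⁻ y, kerT n M x y * φ y ∂σ) * g x ∂u ≤
      ENNReal.ofReal (6 ^ ((n : ℝ) - 1)) * (2 ^ n * (C *
        (K * ((L * K) ^ (a / b) + (L * K) ^ (b / a))) * N)) := by
    intro M
    refine (kerT_form_le hn M u σ hab hφ hg).trans ?_
    gcongr
    have : ∀ e ∈ (Finset.univ : Finset (Fin n → Bool)),
        (dyadic n (2 ^ M) (shift n (2 ^ M) e)).form u σ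
        (fun j => ENNReal.ofReal (((2 : ℝ) ^ M / 2 ^ j) ^ n) ^ (-(a + b))) (2 * M + 1) φ g ≤
        C * (K * ((L * K) ^ (a / b) + (L * K) ^ (b / a))) * N := by
      intro e _
      have := H _ u σ _ K _ _ (hK.pair hn ha hb (h := 2 ^ M) (by positivity) (shift n (2 ^ M) e))
        (by rw [← hL]; exact (ENNReal.rpow_pos (pos_iff_ne_zero.2 LK0) LKt).ne')
        (by rw [← hL]; exact ENNReal.rpow_ne_top_of_ne_zero LK0 LKt)
        (by rw [← hL]; exact (ENNReal.rpow_pos (pos_iff_ne_zero.2 LK0) LKt).ne')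
        (by rw [← hL]; exact ENNReal.rpow_ne_top_of_ne_zero LK0 LKt)
        (2 * M + 1) φ g hφ hg hφt hgt
      rw [← hN, ← hL, ← ENNReal.rpow_mul, ← ENNReal.rpow_mul] at this
      have e1 : -(1 / b) * -a = a / b := by ring
      have e2 : -(1 / a) * -b = b / a := by ring
      rwa [e1, e2] at this
    refine (Finset.sum_le_card_nsmul _ _ _ this).trans_eq ?_
    simp
  have lim : ∫⁻ x, (∫⁻ y, rker n x y * φ y ∂σ) * g x ∂u =
      ⨆ M, ∫⁻ x, (∫⁻ y, kerT n M x y * φ y ∂σ) * g x ∂u := by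
    have m1 : ∀ M x, Measurable fun y => kerT n M x y * φ y := fun M x =>
      ((measurable_kerT n M).comp measurable_prodMk_left).mul hφ
    have m2 : ∀ M, Measurable fun x => ∫⁻ y, kerT n M x y * φ y ∂σ := fun M =>
      Measurable.lintegral_prod_right'
        (f := fun z : En n × En n => kerT n M z.1 z.2 * φ z.2)
        ((measurable_kerT n M).mul (hφ.comp measurable_snd))
    rw [← lintegral_iSup (f := fun M x => (∫⁻ y, kerT n M x y * φ y ∂σ) * g x)
      (fun M => (m2 M).mul hg)]
    · refine lintegral_congr fun x => ?_
      rw [← ENNReal.iSup_mul, ← lintegral_iSup (m1 · x)]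
      · simp_rw [← ENNReal.iSup_mul, iSup_kerT hn]
      · exact fun M N hMN y => mul_le_mul_left (kerT_mono n x y hMN) _
    · intro M N hMN x
      refine mul_le_mul_left (lintegral_mono fun y => ?_) _
      exact mul_le_mul_left (kerT_mono n x y hMN) _
  rw [lim]
  refine iSup_le fun M => (trunc M).trans ?_
  rw [← hL]
  have split : ∀ r : ℝ, 0 ≤ r → (L * K) ^ r = L ^ r * K ^ r := fun r hr =>
    ENNReal.mul_rpow_of_nonneg _ _ hr
  rw [split _ (by positivity), split _ (by positivity)]
  have step : K * (L ^ (a / b) * K ^ (a / b) + L ^ (b / a) * K ^ (b / a)) ≤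
      K * ((L ^ (a / b) + L ^ (b / a)) * K ^ (a / b) +
        (L ^ (a / b) + L ^ (b / a)) * K ^ (b / a)) := by
    gcongr
    · exact le_self_add
    · exact le_add_self
  calc _ ≤ ENNReal.ofReal (6 ^ ((n : ℝ) - 1)) * (2 ^ n * (C *
        (K * ((L ^ (a / b) + L ^ (b / a)) * K ^ (a / b) +
        (L ^ (a / b) + L ^ (b / a)) * K ^ (b / a))) * N)) := by gcongr
    _ = _ := by ring

/-! ### Duality and the passage to weights -/

/-- The converse of Hölder's inequality, tested on truncations of `Φ ^ (1 / a - 1)`. -/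
lemma lintegral_rpow_le_of_dual {X : Type*} [MeasurableSpace X] {u : Measure X} [SigmaFinite u]
    {a : ℝ} (ha : 0 < a) (ha1 : a < 1) {Φ : X → ℝ≥0∞} (hΦ : Measurable Φ) {A : ℝ≥0∞}
    (H : ∀ g : X → ℝ≥0∞, Measurable g → ∫⁻ x, g x ^ (1 / (1 - a)) ∂u ≠ ∞ →
      ∫⁻ x, Φ x * g x ∂u ≤ A * (∫⁻ x, g x ^ (1 / (1 - a)) ∂u) ^ (1 - a)) :
    (∫⁻ x, Φ x ^ (1 / a) ∂u) ^ a ≤ A := by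
  have h1a : 0 < 1 - a := by linarith
  have hq : 0 < 1 / a := by positivity
  have hq1 : 0 < 1 / a - 1 := by rw [sub_pos, one_lt_div ha]; exact ha1
  have trunc : ∀ k : ℕ, ∫⁻ x, (spanningSets u k).indicator (fun x => min (Φ x) k ^ (1 / a)) x ∂u ≤
      A ^ (1 / a) := by
    intro k
    have hB := measurableSet_spanningSets u k
    have hBt := measure_spanningSets_lt_top u k
    obtain ⟨m, hm⟩ : ∃ m, m =
      ∫⁻ x, (spanningSets u k).indicator (fun x => min (Φ x) k ^ (1 / a)) x ∂u := ⟨_, rfl⟩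
    have mt : m ≠ ∞ := by
      rw [hm, lintegral_indicator hB]
      refine ne_top_of_le_ne_top (b := ∫⁻ _ in spanningSets u k, (k : ℝ≥0∞) ^ (1 / a) ∂u) ?_
        (lintegral_mono fun x => by gcongr; exact min_le_right _ _)
      rw [lintegral_const, Measure.restrict_apply_univ]
      exact ENNReal.mul_ne_top (ENNReal.rpow_ne_top_of_nonneg hq.le (by simp)) hBt.ne
    rw [← hm]
    rcases eq_or_ne m 0 with m0 | m0
    · rw [m0]; exact zero_le
    obtain ⟨g, hg⟩ : ∃ g, g = (spanningSets u k).indicator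
      (fun x => min (Φ x) k ^ (1 / a - 1)) := ⟨_, rfl⟩
    have gm : Measurable g := by
      rw [hg]; exact Measurable.indicator (by fun_prop) hB
    have e1 : ∫⁻ x, g x ^ (1 / (1 - a)) ∂u = m := by
      rw [hm]
      refine lintegral_congr fun x => ?_
      by_cases hx : x ∈ spanningSets u k
      · rw [hg, indicator_of_mem hx, indicator_of_mem hx, ← ENNReal.rpow_mul]
        congr 1
        field_simp
      · rw [hg, indicator_of_notMem hx, indicator_of_notMem hx, ENNReal.zero_rpow_of_pos (by positivity)]
    have e2 : m ≤ ∫⁻ x, Φ x * g x ∂u := by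
      rw [hm]
      refine lintegral_mono fun x => ?_
      by_cases hx : x ∈ spanningSets u k
      · rw [hg, indicator_of_mem hx, indicator_of_mem hx]
        calc min (Φ x) k ^ (1 / a) = min (Φ x) k * min (Φ x) k ^ (1 / a - 1) := by
              conv_lhs => rw [show 1 / a = 1 + (1 / a - 1) by ring,
                ENNReal.rpow_add_of_nonneg _ _ zero_le_one hq1.le, ENNReal.rpow_one]
          _ ≤ _ := by gcongr; exact min_le_left _ _
      · rw [indicator_of_notMem hx]; exact zero_le
    have e3 := e2.trans (H g gm (by rw [e1]; exact mt))
    rw [e1] at e3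
    rcases eq_or_ne A ∞ with hA | hA
    · rw [hA, ENNReal.top_rpow_of_pos hq]; exact le_top
    rcases eq_or_ne A 0 with hA0 | hA0
    · rw [hA0, zero_mul, nonpos_iff_eq_zero] at e3; exact absurd e3 m0
    obtain ⟨s, hs⟩ := exists_ex m0 mt
    obtain ⟨t, ht⟩ := exists_ex hA0 hA
    rw [hs, ht] at e3 ⊢
    simp only [ex_rpow, ← ex_add, ex_le] at e3 ⊢
    rw [mul_one_div, le_div_iff₀ ha]
    linarith
  have lim : ∫⁻ x, Φ x ^ (1 / a) ∂u =
      ⨆ k : ℕ, ∫⁻ x, (spanningSets u k).indicator (fun x => min (Φ x) k ^ (1 / a)) x ∂u := by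
    rw [← lintegral_iSup]
    · refine lintegral_congr fun x => ?_
      apply le_antisymm
      · have hmono := monotone_spanningSets u
        have hx := mem_spanningSetsIndex u x
        have hc : Tendsto (fun k : ℕ => min (Φ x) (k : ℝ≥0∞) ^ (1 / a)) atTop
            (nhds (Φ x ^ (1 / a))) := by
          have h1 : Tendsto (fun k : ℕ => min (Φ x) (k : ℝ≥0∞)) atTop (nhds (min (Φ x) ∞)) :=
            tendsto_const_nhds.min ENNReal.tendsto_nat_nhds_top
          rw [min_top_right] at h1
          exact (ENNReal.continuous_rpow_const.tendsto _).comp h1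
        refine le_of_tendsto hc ?_
        filter_upwards [eventually_ge_atTop (spanningSetsIndex u x)] with k hk
        refine le_iSup_of_le k ?_
        rw [indicator_of_mem (hmono hk hx)]
      · refine iSup_le fun k => ?_
        refine (indicator_le_self _ _ x).trans ?_
        gcongr
        exact min_le_left _ _
    · exact fun k => Measurable.indicator (by fun_prop) (measurableSet_spanningSets u k)
    · intro k l hkl x
      refine (indicator_le_indicator_of_subset (monotone_spanningSets u hkl)
        (fun _ => zero_le) x).trans ?_
      refine indicator_le_indicator ?_
      gcongr
  have : ∫⁻ x, Φ x ^ (1 / a) ∂u ≤ A ^ (1 / a) := by rw [lim]; exact iSup_le trunc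
  calc _ ≤ (A ^ (1 / a)) ^ a := by gcongr
    _ = A := by rw [← ENNReal.rpow_mul]; simp [ha.ne']

lemma measurableSet_cube {n : ℕ} (c : En n) (h : ℝ) : MeasurableSet (cube c h) := by
  have : cube c h = ⋂ i, {y : En n | c i ≤ y i} ∩ {y : En n | y i ≤ c i + h} := by
    ext y; simp [cube]
  rw [this]
  exact MeasurableSet.iInter fun i =>
    (measurableSet_le measurable_const (by fun_prop)).inter
      (measurableSet_le (by fun_prop) measurable_const)

/-- A positive finite weight with finite `A_{p,q}` constant gives rise to an `APair`, for
`a = 1 / q` and `b = 1 / p'`. -/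
lemma APair.of_weight {n : ℕ} {q pp : ℝ} (hq : 0 < q) (hpp : 0 < pp) {W : En n → ℝ≥0∞}
    (hW : Measurable W) (W0 : ∀ x, W x ≠ 0) (Wt : ∀ x, W x ≠ ∞) {A : ℝ≥0∞} (hA : A ≠ ∞)
    (H : ∀ c h, 0 < h → avgE (fun x => W x ^ q) (cube c h) *
      avgE (fun x => W x ^ (-pp)) (cube c h) ^ (q / pp) ≤ A) :
    APair (volume.withDensity fun x => W x ^ q) (volume.withDensity fun x => W x ^ (-pp))
      (1 / q) (1 / pp) (A ^ (1 / q)) := by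
  have V0 : ∀ (c : En n) h, 0 < h → volume (cube c h) ≠ 0 := fun c h hh => by
    rw [volume_cube c hh]; simp; positivity
  have Vt : ∀ (c : En n) h, 0 < h → volume (cube c h) ≠ ∞ := fun c h hh => by
    rw [volume_cube c hh]; exact ofReal_ne_top
  have pos : ∀ (r : ℝ) (c : En n) h, 0 < h → ∫⁻ x in cube c h, W x ^ r ≠ 0 := by
    intro r c h hh h0
    rw [lintegral_eq_zero_iff (by fun_prop)] at h0
    have : ∀ᵐ x ∂(volume.restrict (cube c h)), False := by
      filter_upwards [h0] with x hx
      exact (ENNReal.rpow_pos (pos_iff_ne_zero.2 (W0 x)) (Wt x)).ne' hx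
    rw [ae_iff] at this
    simp only [not_false_eq_true, ofPred_true, Measure.restrict_apply_univ] at this
    exact V0 c h hh this
  have av0 : ∀ (r : ℝ) (c : En n) h, 0 < h → avgE (fun x => W x ^ r) (cube c h) ≠ 0 :=
    fun r c h hh => mul_ne_zero (ENNReal.inv_ne_zero.2 (Vt c h hh)) (pos r c h hh)
  have fin : ∀ (r : ℝ) (c : En n) h, 0 < h → avgE (fun x => W x ^ r) (cube c h) ≠ ∞ →
      ∫⁻ x in cube c h, W x ^ r ≠ ∞ := by
    intro r c h hh hav h0
    rw [avgE, h0, ENNReal.mul_top (ENNReal.inv_ne_zero.2 (Vt c h hh))] at hav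
    exact hav rfl
  have prod : ∀ c h, 0 < h → avgE (fun x => W x ^ q) (cube c h) ≠ ∞ ∧
      avgE (fun x => W x ^ (-pp)) (cube c h) ≠ ∞ := by
    intro c h hh
    have hlt := ne_top_of_le_ne_top hA (H c h hh)
    constructor
    · intro ht
      rw [ht, ENNReal.top_mul] at hlt
      · exact hlt rfl
      · rw [Ne, ENNReal.rpow_eq_zero_iff_of_pos (by positivity)]
        exact av0 _ c h hh
    · intro ht
      rw [ht, ENNReal.top_rpow_of_pos (by positivity), ENNReal.mul_top (av0 _ c h hh)] at hlt
      exact hlt rfl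
  have dens : ∀ (r : ℝ) (c : En n) h, (volume.withDensity fun x => W x ^ r) (cube c h) =
      ∫⁻ x in cube c h, W x ^ r := fun r c h => withDensity_apply _ (measurableSet_cube c h)
  have A0 : A ≠ 0 := by
    intro h0
    have := H 0 1 one_pos
    rw [h0, nonpos_iff_eq_zero, mul_eq_zero, ENNReal.rpow_eq_zero_iff_of_pos (by positivity)] at this
    exact this.elim (av0 _ _ _ one_pos) (av0 _ _ _ one_pos)
  refine ⟨(ENNReal.rpow_pos (pos_iff_ne_zero.2 A0) hA).ne',
    ENNReal.rpow_ne_top_of_ne_zero A0 hA, ?_, ?_, ?_, ?_⟩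
  · intro c h hh; rw [dens]; exact fin _ c h hh (prod c h hh).1
  · intro c h hh; rw [dens]; exact fin _ c h hh (prod c h hh).2
  · intro c h hh
    have := H c h hh
    rw [dens, dens]
    simp only [avgE] at this
    obtain ⟨v, hv⟩ := exists_ex (V0 c h hh) (Vt c h hh)
    obtain ⟨s, hs⟩ := exists_ex (pos q c h hh) (fin _ c h hh (prod c h hh).1)
    obtain ⟨t, ht⟩ := exists_ex (pos (-pp) c h hh) (fin _ c h hh (prod c h hh).2)
    obtain ⟨α, hα⟩ := exists_ex A0 hA
    rw [hv, hs, ht, hα] at this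
    rw [hv, hs, ht, hα]
    simp only [ex_inv, ex_rpow, ← ex_add, ex_le] at this ⊢
    have h2 : s * (1 / q) + t * (1 / pp) - v * (1 / q + 1 / pp) =
        (-v + s + (-v + t) * (q / pp)) * (1 / q) := by field_simp; ring
    have h3 : (-v + s + (-v + t) * (q / pp)) * (1 / q) ≤ α * (1 / q) := by gcongr
    linarith
  · intro E hE
    rw [withDensity_apply _ hE, withDensity_apply _ hE]
    obtain ⟨β, hβ⟩ : ∃ β, β = 1 / q + 1 / pp := ⟨_, rfl⟩
    have hβ0 : 0 < β := by rw [hβ]; positivity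
    have holder := ENNReal.lintegral_mul_norm_pow_le (μ := volume.restrict E)
      (f := fun x => W x ^ q) (g := fun x => W x ^ (-pp)) (by fun_prop) (by fun_prop)
      (p := 1 / q / β) (q := 1 / pp / β) (by positivity) (by positivity)
      (by rw [← add_div, ← hβ, div_self hβ0.ne'])
    have one : ∀ x, (W x ^ q) ^ (1 / q / β) * (W x ^ (-pp)) ^ (1 / pp / β) = 1 := by
      intro x
      rw [← ENNReal.rpow_mul, ← ENNReal.rpow_mul, ← ENNReal.rpow_add _ _ (W0 x) (Wt x)]
      have : q * (1 / q / β) + -pp * (1 / pp / β) = 0 := by field_simp; ring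
      rw [this, ENNReal.rpow_zero]
    simp only [one, lintegral_const, Measure.restrict_apply_univ, one_mul] at holder
    rw [← hβ]
    calc volume E ^ β ≤ _ := ENNReal.rpow_le_rpow holder hβ0.le
      _ = _ := by
        rw [ENNReal.mul_rpow_of_nonneg _ _ hβ0.le, ← ENNReal.rpow_mul, ← ENNReal.rpow_mul,
          div_mul_cancel₀ _ hβ0.ne', div_mul_cancel₀ _ hβ0.ne']

lemma APair.one_le {n : ℕ} {u σ : Measure (En n)} {a b : ℝ} {K : ℝ≥0∞} (H : APair u σ a b K) :
    1 ≤ K := by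
  have h := (H.lower _ (measurableSet_cube 0 1)).trans (H.upper 0 1 one_pos)
  rw [volume_cube 0 one_pos] at h
  simpa using h

lemma measurable_rker_right (n : ℕ) (x : En n) : Measurable fun y => rker n x y := by
  unfold rker; fun_prop

/-- The weighted estimate for positive, finite, measurable weights. -/
theorem exists_weighted {n : ℕ} (hn : 2 ≤ n) {p q pp : ℝ} (hp : 1 < p) (hq : 1 < q)
    (hpp : pp = p / (p - 1)) (hab : 1 / q + 1 / pp = ((n : ℝ) - 1) / n) :
    ∃ C : ℝ≥0∞, C ≠ ∞ ∧ C ≠ 0 ∧ ∀ W : En n → ℝ≥0∞, Measurable W → (∀ x, W x ≠ 0) →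
      (∀ x, W x ≠ ∞) → ∀ A : ℝ≥0∞, A ≠ ∞ →
      (∀ c h, 0 < h → avgE (fun x => W x ^ q) (cube c h) *
        avgE (fun x => W x ^ (-pp)) (cube c h) ^ (q / pp) ≤ A) →
      ∀ F : En n → ℝ≥0∞, Measurable F →
        lpNorm q (fun x => W x * ∫⁻ y, rker n x y * F y) volume ≤
          C * A ^ (((n : ℝ) - 1) / n * max 1 (pp / q)) * lpNorm p (fun x => W x * F x) volume := by
  have hp1 : 0 < p - 1 := by linarith
  have hpp0 : 0 < pp := by rw [hpp]; positivity
  have hq0 : 0 < q := by linarith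
  have ha : 0 < 1 / q := by positivity
  have hb : 0 < 1 / pp := by positivity
  obtain ⟨C, hC, H⟩ := exists_ker_form_le hn ha hb hab
  refine ⟨2 * C + 1, by simp [ENNReal.mul_eq_top, hC], by simp, ?_⟩
  intro W hW W0 Wt A hA HA F hF
  have pair := APair.of_weight hq0 hpp0 hW W0 Wt hA HA
  have A1 : 1 ≤ A := by
    have := ENNReal.rpow_le_rpow (pair.one_le) hq0.le
    rwa [ENNReal.one_rpow, ← ENNReal.rpow_mul, one_div_mul_cancel hq0.ne', ENNReal.rpow_one] at this
  have A0 : A ≠ 0 := (zero_lt_one.trans_le A1).ne'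
  have hn' : (2 : ℝ) ≤ n := by exact_mod_cast hn
  have hβ0 : 0 < ((n : ℝ) - 1) / n := div_pos (by linarith) (by linarith)
  have b1 : 1 - 1 / pp = 1 / p := by rw [hpp]; field_simp; ring
  have b2 : 1 / (1 - 1 / pp) = p := by rw [b1, one_div_one_div]
  rcases eq_or_ne (lpNorm p (fun x => W x * F x) volume) ∞ with hN | hN
  · rw [hN, ENNReal.mul_top]
    · exact le_top
    · exact mul_ne_zero (by simp) (ENNReal.rpow_pos (pos_iff_ne_zero.2 A0) hA).ne'
  obtain ⟨u, hu⟩ : ∃ u, u = (volume : Measure (En n)).withDensity fun x => W x ^ q := ⟨_, rfl⟩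
  obtain ⟨σ, hσ⟩ : ∃ σ, σ = (volume : Measure (En n)).withDensity fun x => W x ^ (-pp) :=
    ⟨_, rfl⟩
  rw [← hu, ← hσ] at pair
  have su : SigmaFinite u := by
    rw [hu]
    exact SigmaFinite.withDensity_of_ne_top
      (.of_forall fun x => ENNReal.rpow_ne_top_of_ne_zero (W0 x) (Wt x))
  have sσ : SFinite σ := by rw [hσ]; infer_instance
  -- dualizing with respect to `σ` turns `F` into `φ = F / W ^ (-p')`
  obtain ⟨φ, hφd⟩ : ∃ φ : En n → ℝ≥0∞, φ = fun y => F y * W y ^ pp := ⟨_, rfl⟩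
  have hφ : Measurable φ := by rw [hφd]; fun_prop
  have cancel : ∀ y, W y ^ (-pp) * W y ^ pp = 1 := fun y => by
    rw [← ENNReal.rpow_add _ _ (W0 y) (Wt y), neg_add_cancel, ENNReal.rpow_zero]
  have mW : ∀ r : ℝ, Measurable fun x => W x ^ r := fun r => hW.pow_const r
  have pot : ∀ x, ∫⁻ y, rker n x y * φ y ∂σ = ∫⁻ y, rker n x y * F y := by
    intro x
    have := lintegral_withDensity_eq_lintegral_mul (volume : Measure (En n)) (mW (-pp))
      ((measurable_rker_right n x).mul hφ)
    rw [hσ]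
    refine this.trans (lintegral_congr fun y => ?_)
    simp only [Pi.mul_apply, hφd]
    rw [mul_left_comm, mul_left_comm (W y ^ (-pp)), cancel, mul_one]
  have normφ : ∫⁻ x, φ x ^ p ∂σ = ∫⁻ x, (W x * F x) ^ p := by
    rw [hσ, lintegral_withDensity_eq_lintegral_mul _ (by fun_prop) (by fun_prop)]
    refine lintegral_congr fun y => ?_
    rw [hφd, Pi.mul_apply, ENNReal.mul_rpow_of_nonneg _ _ (by linarith),
      ENNReal.mul_rpow_of_nonneg _ _ (by linarith), ← ENNReal.rpow_mul]
    have e : W y ^ (-pp) * W y ^ (pp * p) = W y ^ p := by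
      rw [← ENNReal.rpow_add _ _ (W0 y) (Wt y)]
      congr 1
      rw [hpp]; field_simp; ring
    rw [← e]; ring
  have hΦ : Measurable fun x => ∫⁻ y, rker n x y * F y :=
    Measurable.lintegral_prod_right' (f := fun z : En n × En n => rker n z.1 z.2 * F z.2)
      ((measurable_rker n).mul (hF.comp measurable_snd))
  have normΦ : ∫⁻ x, (∫⁻ y, rker n x y * F y) ^ q ∂u =
      ∫⁻ x, (W x * ∫⁻ y, rker n x y * F y) ^ q := by
    rw [hu, lintegral_withDensity_eq_lintegral_mul _ (by fun_prop) (hΦ.pow_const _)]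
    refine lintegral_congr fun y => ?_
    rw [ENNReal.mul_rpow_of_nonneg _ _ hq0.le, Pi.mul_apply]
  have Nt : ∫⁻ x, (W x * F x) ^ p ≠ ∞ := by
    intro h
    rw [_root_.lpNorm, h, ENNReal.top_rpow_of_pos (by positivity)] at hN
    exact hN rfl
  have dual := lintegral_rpow_le_of_dual (u := u) ha (by rw [div_lt_one hq0]; exact hq) hΦ
    (A := C * (A ^ (1 / q) * ((A ^ (1 / q)) ^ (1 / q / (1 / pp)) +
      (A ^ (1 / q)) ^ (1 / pp / (1 / q)))) * lpNorm p (fun x => W x * F x) volume) (by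
      intro g hg hgt
      have := H u σ _ pair φ g hφ hg (by rw [b2, normφ]; exact Nt) hgt
      rw [b2, b1, normφ] at this
      simp only [pot] at this
      rw [mul_assoc]
      exact this)
  rw [one_div_one_div, normΦ] at dual
  refine dual.trans (mul_le_mul_left ?_ _)
  obtain ⟨e, he⟩ : ∃ e, e = ((n : ℝ) - 1) / n * max 1 (pp / q) := ⟨_, rfl⟩
  rw [← he]
  have e1 : A ^ (1 / q) * (A ^ (1 / q)) ^ (1 / q / (1 / pp)) ≤ A ^ e := by
    rw [← ENNReal.rpow_mul, ← ENNReal.rpow_add _ _ A0 hA]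
    apply ENNReal.rpow_le_rpow_of_exponent_le A1
    have : 1 / q + 1 / q * (1 / q / (1 / pp)) = (1 / q + 1 / pp) * (pp / q) := by field_simp; ring
    rw [this, hab, he]
    gcongr
    exact le_max_right _ _
  have e2 : A ^ (1 / q) * (A ^ (1 / q)) ^ (1 / pp / (1 / q)) ≤ A ^ e := by
    rw [← ENNReal.rpow_mul, ← ENNReal.rpow_add _ _ A0 hA]
    apply ENNReal.rpow_le_rpow_of_exponent_le A1
    have : 1 / q + 1 / q * (1 / pp / (1 / q)) = (1 / q + 1 / pp) * 1 := by field_simp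
    rw [this, hab, he]
    gcongr
    exact le_max_left _ _
  calc C * (A ^ (1 / q) * ((A ^ (1 / q)) ^ (1 / q / (1 / pp)) +
      (A ^ (1 / q)) ^ (1 / pp / (1 / q)))) ≤ C * (A ^ e + A ^ e) := by
        rw [mul_add]; gcongr
    _ = 2 * C * A ^ e := by ring
    _ ≤ _ := by gcongr; exact le_self_add

/-! ### Degenerate weights and the potential of a signed function -/

/-- A weight with finite `A_{p,q}` constant that vanishes on a set of positive measure vanishes
almost everywhere. -/
lemma ae_zero_or_ae_pos {n : ℕ} {q pp : ℝ} (hq : 0 < q) (hpp : 0 < pp) {W : En n → ℝ≥0∞}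
    (hW : Measurable W) {A : ℝ≥0∞} (hA : A ≠ ∞)
    (H : ∀ c h, 0 < h → avgE (fun x => W x ^ q) (cube c h) *
      avgE (fun x => W x ^ (-pp)) (cube c h) ^ (q / pp) ≤ A) :
    (∀ᵐ x, W x = 0) ∨ ∀ᵐ x, W x ≠ 0 := by
  by_contra! hc
  obtain ⟨h1, h2⟩ := hc
  obtain ⟨Qm, hQm⟩ : ∃ Qm : ℕ → Set (En n), Qm = fun m : ℕ =>
    cube (WithLp.toLp 2 fun _ => (-(m : ℝ))) (2 * m) := ⟨_, rfl⟩
  have mem : ∀ m x, x ∈ Qm m ↔ ∀ i, |x i| ≤ m := by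
    intro m x
    rw [hQm]
    simp only [cube, mem_ofPred_eq, abs_le]
    refine forall_congr' fun i => ?_
    constructor <;> rintro ⟨h, h'⟩ <;> constructor <;> linarith
  have mono : Monotone Qm := fun m l hml x hx => by
    rw [mem] at hx ⊢
    exact fun i => (hx i).trans (Nat.cast_le.2 hml)
  have ex1 : ∀ P : En n → Prop, (¬ ∀ᵐ x, ¬ P x) → ∃ m, volume ({x | P x} ∩ Qm m) ≠ 0 := by
    intro P hP
    by_contra! hc
    apply hP
    rw [ae_iff]
    refine measure_mono_null ?_ (measure_iUnion_null hc)
    intro x hx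
    rw [mem_ofPred_eq, not_not] at hx
    obtain ⟨m, hm⟩ := exists_nat_ge ‖x‖
    refine mem_iUnion.2 ⟨m, hx, (mem m x).2 fun i => ?_⟩
    exact (PiLp.norm_apply_le x i).trans hm
  obtain ⟨m1, hm1⟩ := ex1 (fun x => W x ≠ 0) (by simpa using h1)
  obtain ⟨m2, hm2⟩ := ex1 (fun x => W x = 0) (by simpa using h2)
  obtain ⟨m, hm⟩ : ∃ m, m = max (max m1 m2) 1 := ⟨_, rfl⟩
  have hm0 : (0 : ℝ) < 2 * m := by
    have : 1 ≤ m := by rw [hm]; exact le_max_right _ _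
    have : (1 : ℝ) ≤ m := by exact_mod_cast this
    linarith
  have b1 : volume ({x | W x ≠ 0} ∩ Qm m) ≠ 0 := fun h => hm1 (measure_mono_null
    (inter_subset_inter_right _ (mono (by rw [hm]; simp))) h)
  have b2 : volume ({x | W x = 0} ∩ Qm m) ≠ 0 := fun h => hm2 (measure_mono_null
    (inter_subset_inter_right _ (mono (by rw [hm]; simp))) h)
  have key := H (WithLp.toLp 2 fun _ => (-(m : ℝ))) (2 * m) hm0
  have hQ : cube (WithLp.toLp 2 fun _ => (-(m : ℝ))) (2 * m) = Qm m := by rw [hQm]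
  have Vt : volume (Qm m) ≠ ∞ := by rw [← hQ, volume_cube _ hm0]; exact ofReal_ne_top
  have mQ : MeasurableSet (Qm m) := by rw [← hQ]; exact measurableSet_cube _ _
  have Vi : (volume (Qm m))⁻¹ ≠ 0 := ENNReal.inv_ne_zero.2 Vt
  rw [hQ] at key
  have c1 : avgE (fun x => W x ^ q) (Qm m) ≠ 0 := by
    refine mul_ne_zero Vi fun h => b1 ?_
    rw [lintegral_eq_zero_iff (by fun_prop), EventuallyEq, ae_restrict_iff' mQ] at h
    refine measure_mono_null ?_ (ae_iff.1 h)
    rintro x ⟨hx, hxQ⟩ hcon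
    have := hcon hxQ
    rw [Pi.zero_apply, ENNReal.rpow_eq_zero_iff_of_pos hq] at this
    exact hx this
  have c2 : avgE (fun x => W x ^ (-pp)) (Qm m) = ∞ := by
    have : ∫⁻ x in Qm m, W x ^ (-pp) = ∞ := by
      rw [← top_le_iff]
      calc ∞ = ∫⁻ _ in {x | W x = 0} ∩ Qm m, (∞ : ℝ≥0∞) := by
            rw [lintegral_const, Measure.restrict_apply_univ, ENNReal.top_mul b2]
        _ = ∫⁻ x in {x | W x = 0} ∩ Qm m, W x ^ (-pp) := by
            refine setLIntegral_congr_fun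
              ((measurableSet_eq_fun hW measurable_const).inter mQ) fun x hx => ?_
            have : W x = 0 := hx.1
            simp only [this]
            rw [ENNReal.zero_rpow_of_neg (by linarith)]
        _ ≤ _ := lintegral_mono_set inter_subset_right
    rw [avgE, this, ENNReal.mul_top Vi]
  rw [c2, ENNReal.top_rpow_of_pos (by positivity), ENNReal.mul_top c1, top_le_iff] at key
  exact hA key

lemma ofReal_abs_rieszR_le (n : ℕ) (f : En n → ℝ) (x : En n) :
    ENNReal.ofReal |rieszR n f x| ≤ ∫⁻ y, rker n x y * ENNReal.ofReal |f y| := by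
  rw [← Real.enorm_eq_ofReal_abs, rieszR]
  refine (enorm_integral_le_lintegral_enorm _).trans_eq (lintegral_congr fun y => ?_)
  rw [enorm_mul, Real.enorm_eq_ofReal_abs, Real.enorm_eq_ofReal_abs, mul_comm, rker,
    abs_of_nonneg (a := ‖x - y‖ ^ _) (by positivity)]

lemma avgE_congr {n : ℕ} {g g' : En n → ℝ≥0∞} (h : g =ᵐ[volume] g') (Q : Set (En n)) :
    avgE g Q = avgE g' Q := by
  rw [avgE, avgE, lintegral_congr_ae (ae_restrict_of_ae h)]

/-- sharp weighted bound for the Riesz potential `I₁`, `1 < p < n`: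
`‖w I₁f‖_{L^{p*}} ≤ c [w]_{A_{p,p*}}^{(1/n') max{1, p'/p*}} ‖w f‖_{L^p}`. -/
theorem statement3 (n : ℕ) (hn : 2 ≤ n) (p : ℝ) (hp : 1 < p) (hpn : p < n) :
    ∃ c : ℝ, 0 < c ∧ ∀ w : En n → ℝ, (∀ x, 0 ≤ w x) → LocallyIntegrable w volume →
      Apq n (n * p / (n - p)) (p / (p - 1)) w < ∞ →
      ∀ f : En n → ℝ, Measurable f →
        lpNorm (n * p / (n - p))
            (fun x => ENNReal.ofReal (w x) * ENNReal.ofReal |rieszR n f x|) volume ≤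
          ENNReal.ofReal c *
            Apq n (n * p / (n - p)) (p / (p - 1)) w ^
              ((((n : ℝ) - 1) / n) * max 1 ((p / (p - 1)) / (n * p / (n - p)))) *
            lpNorm p (fun x => ENNReal.ofReal (w x) * ENNReal.ofReal |f x|) volume := by
  obtain ⟨q, hqd⟩ : ∃ q : ℝ, q = n * p / (n - p) := ⟨_, rfl⟩
  obtain ⟨pp, hppd⟩ : ∃ pp : ℝ, pp = p / (p - 1) := ⟨_, rfl⟩
  rw [← hqd, ← hppd]
  have hn' : (2 : ℝ) ≤ n := by exact_mod_cast hn
  have hnp : 0 < (n : ℝ) - p := by linarith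
  have hp1 : 0 < p - 1 := by linarith
  have hq : 1 < q := by
    rw [hqd, one_lt_div hnp]; nlinarith
  have hpp : 0 < pp := by rw [hppd]; positivity
  have hq0 : 0 < q := by linarith
  have hab : 1 / q + 1 / pp = ((n : ℝ) - 1) / n := by
    rw [hqd, hppd]; field_simp; ring
  obtain ⟨C, hC, hC0, H⟩ := exists_weighted hn hp hq hppd hab
  refine ⟨C.toReal, ENNReal.toReal_pos hC0 hC, ?_⟩
  intro w hw hloc hA f hf
  rw [ENNReal.ofReal_toReal hC]
  obtain ⟨A, hAd⟩ : ∃ A, A = Apq n q pp w := ⟨_, rfl⟩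
  rw [← hAd] at hA ⊢
  have hwm : AEMeasurable (fun x => ENNReal.ofReal (w x)) (volume : Measure (En n)) :=
    hloc.aestronglyMeasurable.aemeasurable.ennreal_ofReal
  obtain ⟨W, hW, hWw⟩ := hwm
  have bound : ∀ c h, 0 < h → avgE (fun x => W x ^ q) (cube c h) *
      avgE (fun x => W x ^ (-pp)) (cube c h) ^ (q / pp) ≤ A := by
    intro c h hh
    rw [avgE_congr (g' := fun x => ENNReal.ofReal (w x) ^ q)
        (by filter_upwards [hWw] with x hx; rw [hx]),
      avgE_congr (g := fun x => W x ^ (-pp)) (g' := fun x => ENNReal.ofReal (w x) ^ (-pp))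
        (by filter_upwards [hWw] with x hx; rw [hx]), hAd, Apq]
    exact le_iSup_of_le c (le_iSup_of_le h (le_iSup_of_le hh le_rfl))
  rcases ae_zero_or_ae_pos hq0 hpp hW hA.ne bound with hz | hnz
  · have : lpNorm q (fun x => ENNReal.ofReal (w x) * ENNReal.ofReal |rieszR n f x|) volume = 0 := by
      rw [_root_.lpNorm, ENNReal.rpow_eq_zero_iff_of_pos (by positivity)]
      rw [← lintegral_zero (μ := (volume : Measure (En n)))]
      refine lintegral_congr_ae ?_
      filter_upwards [hz, hWw] with x h1 h2
      rw [h2, h1, zero_mul, ENNReal.zero_rpow_of_pos hq0]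
    rw [this]; exact zero_le
  -- a representative of the weight that is positive and finite everywhere
  classical
  obtain ⟨W', hW'd⟩ : ∃ W' : En n → ℝ≥0∞, W' = fun x => if W x = 0 ∨ W x = ∞ then 1 else W x :=
    ⟨_, rfl⟩
  have hW'm : Measurable W' := by
    rw [hW'd]
    exact Measurable.ite ((measurableSet_eq_fun hW measurable_const).union
      (measurableSet_eq_fun hW measurable_const)) measurable_const hW
  have hW'w : ∀ᵐ x, W' x = ENNReal.ofReal (w x) := by
    filter_upwards [hnz, hWw] with x h1 h2
    rw [hW'd]
    simp only
    rw [if_neg, h2]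
    rintro (h | h)
    · exact h1 h
    · rw [← h2] at h; exact ofReal_ne_top h
  have hW'0 : ∀ x, W' x ≠ 0 := by
    intro x; rw [hW'd]; simp only; split_ifs with h
    · exact one_ne_zero
    · exact fun h0 => h (Or.inl h0)
  have hW't : ∀ x, W' x ≠ ∞ := by
    intro x; rw [hW'd]; simp only; split_ifs with h
    · exact one_ne_top
    · exact fun h0 => h (Or.inr h0)
  have key := H W' hW'm hW'0 hW't A hA.ne (by
    intro c h hh
    rw [avgE_congr (g' := fun x => W x ^ q)
        (by filter_upwards [hWw, hW'w] with x hx hx'; rw [hx', hx]),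
      avgE_congr (g := fun x => W' x ^ (-pp)) (g' := fun x => W x ^ (-pp))
        (by filter_upwards [hWw, hW'w] with x hx hx'; rw [hx', hx])]
    exact bound c h hh) (fun y => ENNReal.ofReal |f y|) (by fun_prop)
  have e1 : lpNorm p (fun x => W' x * ENNReal.ofReal |f x|) volume =
      lpNorm p (fun x => ENNReal.ofReal (w x) * ENNReal.ofReal |f x|) volume := by
    rw [_root_.lpNorm, _root_.lpNorm]
    congr 1
    refine lintegral_congr_ae ?_
    filter_upwards [hW'w] with x hx
    rw [hx]
  rw [e1] at key
  refine le_trans ?_ key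
  rw [_root_.lpNorm, _root_.lpNorm]
  refine ENNReal.rpow_le_rpow (lintegral_mono_ae ?_) (by positivity)
  filter_upwards [hW'w] with x hx
  rw [hx]
  gcongr
  exact ofReal_abs_rieszR_le n f x
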